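/- arXiv:1907.10563 — 2 statements merged into one kernel-verified Lean document; each statement's English description precedes it below -/
import Mathlib

section
/- Let 0 < p < ∞ and let ω be a radial weight. Then there exists a constant C = C(p) > 0 such that C^{-1} ‖f‖_{A^p_ω} ≤ ‖N(Re f)‖_{L^p_ω} ≤ C ‖f‖_{A^p_ω} for every analytic function f on the unit disc 𝔻 with Im f(0) = 0. -/
/-!
Both inequalities already hold on every circle `|ζ| = r < 1`, with constants depending only on `p`,
and integrating them against `ω(r) r dr` gives the theorem. The dilation `f(r ·)` is analytic past
the closed disc and carries the Stolz regions at the circle of radius `r` to those at the unit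
circle, so only the unit circle matters. With principal arguments a Stolz region does not reach
across the negative real axis, so only angles in `(-π, π)` are compared.

`‖f‖ ≲ ‖N(Re f)‖` is the theorem of Burkholder, Gundy and Silverstein. Call an angle `θ` good at
level `l` if `N(Re f) ≤ l` at `e^{iθ}` and `e^{-iθ}`. The curve `θ ↦ exp(-h(θ) + iθ)`, with `h`
eight times the distance to the good angles, is Lipschitz, runs in the Stolz regions at the good
angles, and hence satisfies `|Re f| ≤ l`; the symmetry in `θ` makes it closed. Cauchy's theorem for
`f ^ (4 j + 2)` along the curve bounds `∫ |Im f| ^ (4 j + 2)` by `∫ |Re f| ^ (4 j + 2)`, because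
`Im f(0) = 0`. Chebyshev's inequality turns this into a distributional inequality, and integration
over `l` gives the estimate for `p < 4 j + 2`.

For `‖N(Re f)‖ ≲ ‖f‖`, the function `|f| ^ (p / 2)` is at most the Poisson integral of its boundary
values: for a polynomial, reflect the zeros in the disc across the circle and take a holomorphic
power, then pass to the limit along Taylor polynomials. On a Stolz region the Poisson integral is at
most a multiple of the Hardy–Littlewood maximal function, which is bounded on `L²`.

A divergent Bochner integral is `0`, so the comparison is made between lower Lebesgue integrals; the
two inequalities together show that both sides are finite or both are infinite.
-/

open MeasureTheory Set

/-- Tail integral `ω̂(r) = ∫_r^1 ω(s) ds`. -/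
noncomputable def tailInt (ω : ℝ → ℝ) (r : ℝ) : ℝ := ∫ s in r..1, ω s

/-- A radial weight: nonnegative, integrable on `[0,1)`, with positive tails. -/
def RadialWeight (ω : ℝ → ℝ) : Prop :=
  (∀ r ∈ Set.Ico (0:ℝ) 1, 0 ≤ ω r) ∧ MeasureTheory.IntegrableOn ω (Set.Ico 0 1) ∧
    ∀ r ∈ Set.Ico (0:ℝ) 1, 0 < tailInt ω r

/-- The class `D̂` of upper doubling weights. -/
def Dhat (ω : ℝ → ℝ) : Prop :=
  ∃ C : ℝ, 1 ≤ C ∧ ∀ r ∈ Set.Ico (0:ℝ) 1, tailInt ω r ≤ C * tailInt ω ((1 + r) / 2)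

/-- The class `Ď`. -/
def Dcheck (ω : ℝ → ℝ) : Prop :=
  ∃ K C : ℝ, 1 < K ∧ 1 < C ∧ ∀ r ∈ Set.Ico (0:ℝ) 1,
    C * tailInt ω (1 - (1 - r) / K) ≤ tailInt ω r

/-- The associated weight `ω̃(r) = ω̂(r)/(1-r)`. -/
noncomputable def assocW (ω : ℝ → ℝ) (r : ℝ) : ℝ := tailInt ω r / (1 - r)

/-- `‖f‖_{A^p_ω}^p = ∫_𝔻 |f|^p ω dA`, with `dA` the normalized area measure. -/
noncomputable def ApNorm (p : ℝ) (ω : ℝ → ℝ) (f : ℂ → ℂ) : ℝ :=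
  Real.pi⁻¹ * ∫ z in Metric.ball (0:ℂ) 1, ‖f z‖ ^ p * ω ‖z‖

/-- `‖Re f‖_{L^p_ω}^p = ∫_𝔻 |Re f|^p ω dA`. -/
noncomputable def LpReNorm (p : ℝ) (ω : ℝ → ℝ) (f : ℂ → ℂ) : ℝ :=
  Real.pi⁻¹ * ∫ z in Metric.ball (0:ℂ) 1, |(f z).re| ^ p * ω ‖z‖

/-- `M_p^p(s, Re f)`, the `p`-th power of the `p`-mean of `Re f` on the circle of radius `s`. -/
noncomputable def Mpp (p : ℝ) (f : ℂ → ℂ) (s : ℝ) : ℝ :=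
  (2 * Real.pi)⁻¹ * ∫ θ in (0:ℝ)..(2 * Real.pi),
    |(f ((s : ℂ) * Complex.exp ((θ : ℂ) * Complex.I))).re| ^ p

/-- `sup_{0<s<r} M_p^p(s, Re f)`. -/
noncomputable def supMpp (p : ℝ) (f : ℂ → ℂ) (r : ℝ) : ℝ :=
  sSup ((fun s => Mpp p f s) '' Set.Ioo (0:ℝ) r)

/-- The Stolz-type region `Γ(u) = {z ∈ 𝔻 : |arg u − arg z| < (1/2)(1 − |z|/|u|)}`. -/
def Stolz (u : ℂ) : Set ℂ :=
  {z : ℂ | ‖z‖ < 1 ∧ |Complex.arg u - Complex.arg z| < (1 / 2) * (1 - ‖z‖ / ‖u‖)}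

/-- Nontangential maximal function `N(v)(ζ) = sup_{z ∈ Γ(ζ)} |v(z)|`. -/
noncomputable def Ntang (v : ℂ → ℝ) (ζ : ℂ) : ℝ := sSup ((fun z => |v z|) '' Stolz ζ)

/-- `‖N(Re f)‖_{L^p_ω}^p`. -/
noncomputable def NpNorm (p : ℝ) (ω : ℝ → ℝ) (f : ℂ → ℂ) : ℝ :=
  Real.pi⁻¹ * ∫ z in Metric.ball (0:ℂ) 1, (Ntang (fun w => (f w).re) z) ^ p * ω ‖z‖

section Stolz

open Metric Complex
open scoped Real Topology

variable {v : ℂ → ℝ} {ζ z : ℂ} {R r l θ φ : ℝ}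

lemma arg_circleMap_zero (hr : 0 < r) (hθ : θ ∈ Ioo (-π) π) : arg (circleMap 0 r θ) = θ := by
  rw [circleMap_zero, exp_mul_I, arg_mul_cos_add_sin_mul_I hr ⟨hθ.1, hθ.2.le⟩]

lemma circleMap_zero_mem_slitPlane (hr : 0 < r) (hθ : θ ∈ Ioo (-π) π) :
    circleMap 0 r θ ∈ slitPlane := by
  rw [mem_slitPlane_iff_arg, arg_circleMap_zero hr hθ]
  exact ⟨hθ.2.ne, circleMap_ne_center hr.ne'⟩

lemma circleMap_zero_mem_ball (hr : 0 ≤ r) (hrR : r < R) (θ : ℝ) : circleMap 0 r θ ∈ ball 0 R := by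
  rwa [mem_ball_zero_iff, norm_circleMap_zero, abs_of_nonneg hr]

lemma continuous_comp_circleMap {E : Type*} [TopologicalSpace E] {G : ℂ → E}
    (hG : ContinuousOn G (ball 0 R)) (hr : 0 ≤ r) (hrR : r < R) :
    Continuous fun θ => G (circleMap 0 r θ) :=
  hG.comp_continuous (continuous_circleMap 0 r) (circleMap_zero_mem_ball hr hrR)

lemma norm_lt_of_mem_stolz (hζ : ζ ≠ 0) (hz : z ∈ Stolz ζ) : ‖z‖ < ‖ζ‖ := by
  have hquot : ‖z‖ / ‖ζ‖ < 1 := by linarith [(abs_nonneg _).trans_lt hz.2]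
  rwa [div_lt_one (norm_pos_iff.mpr hζ)] at hquot

lemma stolz_ofReal_mul (hr : 0 < r) (hr1 : r ≤ 1) (hζ : ‖ζ‖ ≤ 1) (hζ0 : ζ ≠ 0) :
    Stolz (r * ζ) = (fun z : ℂ => r * z) '' Stolz ζ := by
  have hr0 : (r : ℂ) ≠ 0 := ofReal_ne_zero.mpr hr.ne'
  have hmem (z : ℂ) : r * z ∈ Stolz (r * ζ) ↔ z ∈ Stolz ζ := by
    have hcone : |arg (r * ζ) - arg (r * z)| < 1 / 2 * (1 - ‖r * z‖ / ‖r * ζ‖) ↔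
        |arg ζ - arg z| < 1 / 2 * (1 - ‖z‖ / ‖ζ‖) := by
      rw [arg_real_mul _ hr, arg_real_mul _ hr, norm_mul, norm_mul,
        mul_div_mul_left _ _ (norm_ne_zero_iff.mpr hr0)]
    refine ⟨fun h => ⟨?_, hcone.mp h.2⟩, fun h => ⟨?_, hcone.mpr h.2⟩⟩
    · have hlt := norm_lt_of_mem_stolz (mul_ne_zero hr0 hζ0) h
      rw [norm_mul, norm_mul] at hlt
      exact (lt_of_mul_lt_mul_left hlt (norm_nonneg _)).trans_le hζ
    · rw [norm_mul, norm_real, Real.norm_of_nonneg hr.le]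
      exact (mul_le_of_le_one_left (norm_nonneg z) hr1).trans_lt h.1
  ext w
  refine ⟨fun hw => ⟨(r : ℂ)⁻¹ * w, (hmem _).mp ?_, mul_inv_cancel_left₀ hr0 w⟩, ?_⟩
  · rwa [mul_inv_cancel_left₀ hr0]
  · rintro ⟨z, hz, rfl⟩
    exact (hmem z).mpr hz

lemma circleMap_mem_stolz (hθ : θ ∈ Ioo (-π) π) (hφ : φ ∈ Ioo (-π) π) (hr : 0 < r) (hr1 : r < 1)
    (h : |θ - φ| < 1 / 2 * (1 - r)) : circleMap 0 r φ ∈ Stolz (circleMap 0 1 θ) := by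
  refine ⟨by rwa [norm_circleMap_zero, abs_of_pos hr], ?_⟩
  rwa [arg_circleMap_zero one_pos hθ, arg_circleMap_zero hr hφ, norm_circleMap_zero,
    norm_circleMap_zero, abs_one, div_one, abs_of_pos hr]

lemma ntang_nonneg (v : ℂ → ℝ) (ζ : ℂ) : 0 ≤ Ntang v ζ := by
  apply Real.sSup_nonneg
  rintro _ ⟨z, -, rfl⟩
  exact abs_nonneg _

lemma exists_mem_stolz_of_lt_ntang (hl : 0 ≤ l) (h : l < Ntang v ζ) :
    ∃ z ∈ Stolz ζ, l < |v z| := by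
  contrapose! h
  refine Real.sSup_le ?_ hl
  rintro _ ⟨z, hz, rfl⟩
  exact h z hz

lemma ntang_ofReal_mul (hr : 0 < r) (hr1 : r ≤ 1) (hζ : ‖ζ‖ ≤ 1) (hζ0 : ζ ≠ 0) :
    Ntang v (r * ζ) = Ntang (fun z => v (r * z)) ζ := by
  rw [Ntang, Ntang, stolz_ofReal_mul hr hr1 hζ hζ0, image_image]

lemma abs_le_ntang_of_mem_stolz (hv : ContinuousOn v (ball 0 R)) (hζ : ζ ∈ ball 0 R)
    (hζ0 : ζ ≠ 0) (hz : z ∈ Stolz ζ) : |v z| ≤ Ntang v ζ := by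
  have hsub : closedBall (0 : ℂ) ‖ζ‖ ⊆ ball 0 R :=
    closedBall_subset_ball (mem_ball_zero_iff.mp hζ)
  have hbdd : BddAbove ((fun z => |v z|) '' Stolz ζ) :=
    ((isCompact_closedBall 0 ‖ζ‖).bddAbove_image (hv.mono hsub).abs).mono <|
      image_mono fun w hw => mem_closedBall_zero_iff.mpr (norm_lt_of_mem_stolz hζ0 hw).le
  exact le_csSup hbdd ⟨z, hz, rfl⟩

/- The vertex itself lies on the boundary of its Stolz region. -/
lemma abs_le_ntang (hv : ContinuousOn v (ball 0 R)) (hζ : ζ ∈ ball 0 R) (hζ0 : ζ ≠ 0)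
    (hζ1 : ‖ζ‖ ≤ 1) : |v ζ| ≤ Ntang v ζ := by
  have hζpos : 0 < ‖ζ‖ := norm_pos_iff.mpr hζ0
  have hlim : Filter.Tendsto (fun t : ℝ => |v (t * ζ)|) (𝓝[<] 1) (𝓝 |v ζ|) := by
    have hray : ContinuousAt (fun t : ℝ => (t : ℂ) * ζ) 1 := by fun_prop
    have hvζ : ContinuousAt v (((1 : ℝ) : ℂ) * ζ) := by
      rw [ofReal_one, one_mul]
      exact hv.continuousAt (isOpen_ball.mem_nhds hζ)
    have h := (ContinuousAt.comp (f := fun t : ℝ => (t : ℂ) * ζ) hvζ hray).abs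
    simpa only [ContinuousAt, Function.comp_apply, ofReal_one, one_mul] using
      h.mono_left nhdsWithin_le_nhds
  refine le_of_tendsto hlim ?_
  filter_upwards [Ioo_mem_nhdsLT (zero_lt_one' ℝ)] with t ht
  have hnorm : ‖(t : ℂ) * ζ‖ = t * ‖ζ‖ := by
    rw [norm_mul, norm_real, Real.norm_of_nonneg ht.1.le]
  refine abs_le_ntang_of_mem_stolz hv hζ hζ0 ⟨?_, ?_⟩
  · rw [hnorm]
    exact (mul_lt_of_lt_one_left hζpos ht.2).trans_le hζ1
  · rw [arg_real_mul ζ ht.1, sub_self, abs_zero, hnorm, mul_div_cancel_right₀ _ hζpos.ne']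
    linarith [ht.2]

/- Membership in `Stolz ζ` is an open condition on `ζ` away from the branch cut of the argument. -/
lemma lowerSemicontinuousOn_ntang (hv : ContinuousOn v (ball 0 R)) :
    LowerSemicontinuousOn (Ntang v) (ball 0 R ∩ slitPlane) := by
  intro ζ hζ l hl
  rcases lt_or_ge l 0 with hl0 | hl0
  · exact Filter.Eventually.of_forall fun u => hl0.trans_le (ntang_nonneg v u)
  obtain ⟨z, hz, hlz⟩ := exists_mem_stolz_of_lt_ntang hl0 hl
  have hζ0 : ‖ζ‖ ≠ 0 := norm_ne_zero_iff.mpr (slitPlane_ne_zero hζ.2)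
  have harg : ContinuousAt (fun u : ℂ => |arg u - arg z|) ζ :=
    ((continuousAt_arg hζ.2).sub continuousAt_const).abs
  have hheight : ContinuousAt (fun u : ℂ => (1 / 2 : ℝ) * (1 - ‖z‖ / ‖u‖)) ζ := by
    fun_prop (disch := exact hζ0)
  filter_upwards [self_mem_nhdsWithin, nhdsWithin_le_nhds (harg.eventually_lt hheight hz.2)]
    with u hu hcone
  exact hlz.trans_le
    (abs_le_ntang_of_mem_stolz hv hu.1 (slitPlane_ne_zero hu.2) ⟨hz.1, hcone⟩)

lemma aemeasurable_restrict_of_lowerSemicontinuousOn {α : Type*} [TopologicalSpace α]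
    [MeasurableSpace α] [OpensMeasurableSpace α] {μ : Measure α} {g : α → ℝ} {s : Set α}
    (hs : MeasurableSet s) (hg : LowerSemicontinuousOn g s) : AEMeasurable g (μ.restrict s) :=
  aemeasurable_restrict_of_measurable_subtype hs
    (lowerSemicontinuous_restrict_iff.mpr hg).measurable

lemma lowerSemicontinuousOn_ntang_circleMap (hv : ContinuousOn v (ball 0 R)) (hr : 0 < r)
    (hrR : r < R) : LowerSemicontinuousOn (fun θ => Ntang v (circleMap 0 r θ)) (Ioo (-π) π) :=
  (lowerSemicontinuousOn_ntang hv).comp (continuous_circleMap 0 r).continuousOn fun θ hθ =>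
    ⟨circleMap_zero_mem_ball hr.le hrR θ, circleMap_zero_mem_slitPlane hr hθ⟩

lemma ae_mem_slitPlane : ∀ᵐ z : ℂ, z ∈ slitPlane := by
  filter_upwards [volume_preserving_equiv_real_prod.quasiMeasurePreserving.ae
    polarCoord_source_ae_eq_univ.mem_iff] with z hz
  simpa [mem_slitPlane_iff] using hz

lemma aemeasurable_ntang (hv : ContinuousOn v (ball 0 R)) :
    AEMeasurable (Ntang v) (volume.restrict (ball 0 R)) := by
  have hslit : (ball 0 R ∩ slitPlane : Set ℂ) =ᵐ[volume] ball 0 R := by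
    filter_upwards [ae_mem_slitPlane] with z hz
    exact propext (and_iff_left hz)
  rw [← Measure.restrict_congr_set hslit]
  exact aemeasurable_restrict_of_lowerSemicontinuousOn
    (measurableSet_ball.inter isOpen_slitPlane.measurableSet) (lowerSemicontinuousOn_ntang hv)

end Stolz

section Sawtooth

open Metric Complex
open scoped Real NNReal

variable {K : ℝ≥0} {h : ℝ → ℝ} {c : ℂ} {r R : ℝ}

lemma intervalIntegrable_deriv_of_lipschitz {E : Type*} [NormedAddCommGroup E] [NormedSpace ℝ E]
    [CompleteSpace E] {φ : ℝ → E} (hφ : LipschitzWith K φ) (a b : ℝ) :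
    IntervalIntegrable (deriv φ) volume a b := by
  rw [intervalIntegrable_iff]
  exact Measure.integrableOn_of_bounded (M := K) (by simp) (aestronglyMeasurable_deriv _ _)
    (Filter.Eventually.of_forall fun θ => norm_deriv_le_of_lipschitz hφ)

lemma integral_deriv_eq_sub_of_lipschitz {E : Type*} [NormedAddCommGroup E] [NormedSpace ℝ E]
    [FiniteDimensional ℝ E] {φ : ℝ → E} (hφ : LipschitzWith K φ) (a b : ℝ) :
    ∫ θ in a..b, deriv φ θ = φ b - φ a := by
  have : CompleteSpace E := FiniteDimensional.complete ℝ E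
  refine (SeparatingDual.eq_iff_forall_dual_eq (R := ℝ)).mpr fun L => ?_
  have hL : LipschitzWith (‖L‖₊ * K) fun θ => L (φ θ) := L.lipschitz.comp hφ
  have hderiv : ∀ᵐ θ : ℝ, L (deriv φ θ) = deriv (fun θ => L (φ θ)) θ := by
    filter_upwards [hφ.ae_differentiableAt] with θ hθ
    exact (L.hasFDerivAt.comp_hasDerivAt θ hθ.hasDerivAt).deriv.symm
  rw [← L.intervalIntegral_comp_comm (intervalIntegrable_deriv_of_lipschitz hφ a b), map_sub,
    intervalIntegral.integral_congr_ae (hderiv.mono fun θ hθ _ => hθ)]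
  exact hL.lipschitzOnWith.absolutelyContinuousOnInterval.integral_deriv_eq_sub

lemma integral_comp_mul_deriv_eq_zero_of_lipschitz {H : ℂ → ℂ}
    (hH : DifferentiableOn ℂ H (ball c R)) (hr : r < R) {γ : ℝ → ℂ} (hγ : LipschitzWith K γ)
    (hγr : ∀ θ, γ θ ∈ closedBall c r) {a b : ℝ} (hclosed : γ a = γ b) :
    ∫ θ in a..b, H (γ θ) * deriv γ θ = 0 := by
  have hsub : closedBall c r ⊆ ball c R := closedBall_subset_ball hr
  obtain ⟨P, hP⟩ := hH.isExactOn_ball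
  obtain ⟨M, hM⟩ := (isCompact_closedBall c r).exists_bound_of_continuousOn
    (hH.continuousOn.mono hsub)
  have hPLip : LipschitzOnWith M.toNNReal P (closedBall c r) :=
    (convex_closedBall c r).lipschitzOnWith_of_nnnorm_hasDerivWithin_le (𝕜 := ℂ)
      (fun z hz => (hP z (hsub hz)).hasDerivWithinAt)
      fun z hz => NNReal.coe_le_coe.mp ((hM z hz).trans (Real.le_coe_toNNReal M))
  have hPγ : LipschitzWith (M.toNNReal * K) fun θ => P (γ θ) :=
    lipschitzOnWith_univ.mp (hPLip.comp hγ.lipschitzOnWith fun θ _ => hγr θ)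
  have hderiv : ∀ᵐ θ : ℝ, H (γ θ) * deriv γ θ = deriv (fun θ => P (γ θ)) θ := by
    filter_upwards [hγ.ae_differentiableAt] with θ hθ
    exact ((hP (γ θ) (hsub (hγr θ))).comp θ hθ.hasDerivAt).deriv.symm
  rw [intervalIntegral.integral_congr_ae (hderiv.mono fun θ hθ _ => hθ),
    integral_deriv_eq_sub_of_lipschitz hPγ, hclosed, sub_self]

/-- The curve `θ ↦ exp (-h θ + i θ)`, the graph over the unit circle of a height `h` measured
logarithmically. -/
noncomputable def sawtooth (h : ℝ → ℝ) (θ : ℝ) : ℂ := circleMap 0 (Real.exp (-h θ)) θ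

lemma sawtooth_eq_exp (h : ℝ → ℝ) (θ : ℝ) : sawtooth h θ = exp (-(h θ : ℂ) + θ * I) := by
  rw [sawtooth, circleMap_zero, exp_add, ofReal_exp, ofReal_neg]

lemma sawtooth_ne_zero (h : ℝ → ℝ) (θ : ℝ) : sawtooth h θ ≠ 0 :=
  circleMap_ne_center (Real.exp_ne_zero _)

lemma sawtooth_mem_closedBall (h0 : ∀ θ, 0 ≤ h θ) (θ : ℝ) : sawtooth h θ ∈ closedBall 0 1 := by
  rw [mem_closedBall_zero_iff, sawtooth, norm_circleMap_zero, Real.abs_exp, Real.exp_le_one_iff]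
  exact neg_nonpos.mpr (h0 θ)

lemma sawtooth_neg_pi (hper : h (-π) = h π) : sawtooth h (-π) = sawtooth h π := by
  have hθ : -π = π - 2 * π := by ring
  rw [sawtooth, sawtooth, hper, hθ, (periodic_circleMap _ _).sub_eq]

lemma hasDerivAt_sawtooth {θ : ℝ} (hθ : DifferentiableAt ℝ h θ) :
    HasDerivAt (sawtooth h) (sawtooth h θ * (-((deriv h θ : ℝ) : ℂ) + I)) θ := by
  have hexponent :
      HasDerivAt (fun θ : ℝ => -(h θ : ℂ) + θ * I) (-((deriv h θ : ℝ) : ℂ) + 1 * I) θ :=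
    hθ.hasDerivAt.ofReal_comp.neg.add ((hasDerivAt_id θ).ofReal_comp.mul_const I)
  rw [funext (sawtooth_eq_exp h)]
  simpa only [one_mul] using hexponent.cexp

lemma lipschitzOnWith_exp_re_nonpos : LipschitzOnWith 1 exp {w : ℂ | w.re ≤ 0} := by
  refine (convex_halfSpace_re_le 0).lipschitzOnWith_of_nnnorm_deriv_le (𝕜 := ℂ)
    (fun w _ => differentiableAt_exp) fun w hw => ?_
  rw [Complex.deriv_exp, ← NNReal.coe_le_coe, coe_nnnorm, norm_exp, NNReal.coe_one,
    Real.exp_le_one_iff]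
  exact hw

lemma lipschitzWith_sawtooth (hL : LipschitzWith K h) (h0 : ∀ θ, 0 ≤ h θ) :
    LipschitzWith (K + 1) (sawtooth h) := by
  have hexponent : LipschitzWith (K + 1) fun θ : ℝ => -(h θ : ℂ) + θ * I := by
    refine LipschitzWith.add ?_ ?_
    · simpa only [one_mul] using! (isometry_ofReal.lipschitz.comp hL).neg
    · refine LipschitzWith.of_dist_le_mul fun x y => ?_
      rw [dist_eq_norm, ← sub_mul, ← ofReal_sub, norm_mul, norm_I, norm_real, mul_one,
        NNReal.coe_one, one_mul, dist_eq_norm]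
  rw [funext (sawtooth_eq_exp h), ← lipschitzOnWith_univ, ← one_mul (K + 1)]
  exact lipschitzOnWith_exp_re_nonpos.comp hexponent.lipschitzOnWith fun θ _ => by simp [h0 θ]

lemma continuous_comp_sawtooth {E : Type*} [TopologicalSpace E] {G : ℂ → E}
    (hG : ContinuousOn G (ball 0 R)) (hR : 1 < R) (hL : LipschitzWith K h) (h0 : ∀ θ, 0 ≤ h θ) :
    Continuous fun θ => G (sawtooth h θ) :=
  hG.comp_continuous (lipschitzWith_sawtooth hL h0).continuous fun θ =>
    closedBall_subset_ball hR (sawtooth_mem_closedBall h0 θ)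

lemma intervalIntegrable_deriv_mul_I (hL : LipschitzWith K h) (a b : ℝ) :
    IntervalIntegrable (fun θ => ((deriv h θ : ℝ) : ℂ) * I) volume a b :=
  have hdh := intervalIntegrable_deriv_of_lipschitz hL a b
  IntervalIntegrable.mul_const ⟨hdh.1.ofReal, hdh.2.ofReal⟩ I

lemma intervalIntegrable_sawtooth {G : ℂ → ℂ} (hG : ContinuousOn G (ball 0 R)) (hR : 1 < R)
    (hL : LipschitzWith K h) (h0 : ∀ θ, 0 ≤ h θ) (a b : ℝ) :
    IntervalIntegrable (fun θ => G (sawtooth h θ) * (1 + ((deriv h θ : ℝ) : ℂ) * I)) volume a b :=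
  (intervalIntegrable_const.add (intervalIntegrable_deriv_mul_I hL a b)).continuousOn_mul
    (continuous_comp_sawtooth hG hR hL h0).continuousOn

lemma integral_one_add_deriv_mul_I (hL : LipschitzWith K h) {a b : ℝ} (hab : h a = h b) :
    ∫ θ in a..b, (1 + ((deriv h θ : ℝ) : ℂ) * I) = b - a := by
  rw [intervalIntegral.integral_add (f := fun _ => (1 : ℂ)) intervalIntegrable_const
      (intervalIntegrable_deriv_mul_I hL a b),
    intervalIntegral.integral_mul_const, intervalIntegral.integral_ofReal,
    integral_deriv_eq_sub_of_lipschitz hL, hab, sub_self, intervalIntegral.integral_const,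
    ofReal_zero, zero_mul, add_zero, real_smul, mul_one, ofReal_sub]

/- Cauchy's theorem for `(G z - G 0) / z`; along the curve `dz / z = (-h' + i) dθ`. -/
lemma integral_sawtooth_eq (hR : 1 < R) {G : ℂ → ℂ} (hG : DifferentiableOn ℂ G (ball 0 R))
    (hL : LipschitzWith K h) (h0 : ∀ θ, 0 ≤ h θ) (hper : h (-π) = h π) :
    ∫ θ in -π..π, G (sawtooth h θ) * (1 + ((deriv h θ : ℝ) : ℂ) * I) = 2 * π * G 0 := by
  have hslope : DifferentiableOn ℂ (dslope G 0) (ball 0 R) :=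
    (differentiableOn_dslope (ball_mem_nhds 0 (by linarith))).mpr hG
  have hcauchy := integral_comp_mul_deriv_eq_zero_of_lipschitz hslope hR
    (lipschitzWith_sawtooth hL h0) (sawtooth_mem_closedBall h0) (sawtooth_neg_pi hper)
  have hintegrand : ∀ᵐ θ : ℝ, dslope G 0 (sawtooth h θ) * deriv (sawtooth h) θ =
      I * (G (sawtooth h θ) * (1 + ((deriv h θ : ℝ) : ℂ) * I) -
        G 0 * (1 + ((deriv h θ : ℝ) : ℂ) * I)) := by
    filter_upwards [hL.ae_differentiableAt] with θ hθ
    have hz : sawtooth h θ ≠ 0 := sawtooth_ne_zero h θ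
    rw [(hasDerivAt_sawtooth hθ).deriv, dslope_of_ne _ hz, slope_def_field, sub_zero]
    field_simp
    linear_combination (G (sawtooth h θ) - G 0) * ((deriv h θ : ℝ) : ℂ) * (-I_sq)
  rw [intervalIntegral.integral_congr_ae (hintegrand.mono fun θ hθ _ => hθ),
    intervalIntegral.integral_const_mul, mul_eq_zero, or_iff_right I_ne_zero,
    intervalIntegral.integral_sub (intervalIntegrable_sawtooth hG.continuousOn hR hL h0 _ _)
      (intervalIntegrable_sawtooth continuousOn_const hR hL h0 _ _),
    intervalIntegral.integral_const_mul, integral_one_add_deriv_mul_I hL hper, sub_eq_zero]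
    at hcauchy
  rw [hcauchy, ofReal_neg]
  ring

lemma re_mul_one_add_ofReal_mul_I (w : ℂ) (t : ℝ) : (w * (1 + t * I)).re = w.re - t * w.im := by
  simp only [mul_re, add_re, one_re, ofReal_re, I_re, mul_zero, ofReal_im, I_im, mul_one, sub_self,
    add_zero, add_im, one_im, mul_im, zero_add]
  ring

lemma intervalIntegrable_re_sawtooth {G : ℂ → ℂ} (hG : ContinuousOn G (ball 0 R)) (hR : 1 < R)
    (hL : LipschitzWith K h) (h0 : ∀ θ, 0 ≤ h θ) (a b : ℝ) :
    IntervalIntegrable (fun θ => (G (sawtooth h θ)).re - deriv h θ * (G (sawtooth h θ)).im)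
      volume a b := by
  have hint := intervalIntegrable_sawtooth hG hR hL h0 a b
  simp only [← re_mul_one_add_ofReal_mul_I]
  exact ⟨hint.1.re, hint.2.re⟩

lemma integral_re_sawtooth_eq (hR : 1 < R) {G : ℂ → ℂ} (hG : DifferentiableOn ℂ G (ball 0 R))
    (hL : LipschitzWith K h) (h0 : ∀ θ, 0 ≤ h θ) (hper : h (-π) = h π) :
    ∫ θ in -π..π, ((G (sawtooth h θ)).re - deriv h θ * (G (sawtooth h θ)).im) =
      2 * π * (G 0).re := by
  have hre := reCLM.intervalIntegral_comp_comm
    (intervalIntegrable_sawtooth hG.continuousOn hR hL h0 (-π) π)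
  simp only [reCLM_apply, re_mul_one_add_ofReal_mul_I, integral_sawtooth_eq hR hG hL h0 hper] at hre
  rw [hre, ← ofReal_ofNat, ← ofReal_mul, re_ofReal_mul]

end Sawtooth

section PowerInequality

open Metric Complex
open scoped Real NNReal

lemma norm_pow_succ_sub_pow_succ_le {𝕜 : Type*} [NormedField 𝕜] {x y : 𝕜} {M : ℝ}
    (hx : ‖x‖ ≤ M) (hy : ‖y‖ ≤ M) (n : ℕ) :
    ‖x ^ (n + 1) - y ^ (n + 1)‖ ≤ (n + 1) * M ^ n * ‖x - y‖ := by
  have hM : 0 ≤ M := (norm_nonneg x).trans hx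
  have hterm : ∀ i ∈ Finset.range (n + 1), ‖x ^ i * y ^ (n + 1 - 1 - i)‖ ≤ M ^ n := by
    intro i hi
    rw [norm_mul, norm_pow, norm_pow]
    calc ‖x‖ ^ i * ‖y‖ ^ (n + 1 - 1 - i) ≤ M ^ i * M ^ (n + 1 - 1 - i) := by gcongr
      _ = M ^ n := by
        rw [← pow_add]
        congr 1
        have := Finset.mem_range.mp hi
        omega
  rw [← (Commute.all x y).geom_sum₂_mul, norm_mul]
  gcongr
  simpa using norm_sum_le_of_le _ hterm

lemma exists_mul_add_pow_mul_le {c : ℝ} (hc : 0 ≤ c) (l : ℕ) : ∃ K : ℝ, 0 < K ∧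
    ∀ a b : ℝ, 0 ≤ a → 0 ≤ b → c * (a + b) ^ l * a ≤ b ^ (l + 1) + K * a ^ (l + 1) := by
  set t : ℝ := c * 2 ^ l + 1
  have ht : 1 ≤ t := le_add_of_nonneg_left (by positivity)
  refine ⟨(c + 1) * (1 + t) ^ l, by positivity, fun a b ha hb => ?_⟩
  rcases le_total (t * a) b with hab | hab
  · have hab' : a ≤ b := (le_mul_of_one_le_left ha ht).trans hab
    calc c * (a + b) ^ l * a ≤ c * (2 * b) ^ l * a := by gcongr; linarith
      _ = b ^ l * (c * 2 ^ l * a) := by rw [mul_pow]; ring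
      _ ≤ b ^ l * b := by gcongr; nlinarith
      _ ≤ b ^ (l + 1) + (c + 1) * (1 + t) ^ l * a ^ (l + 1) := by
        rw [← pow_succ]; exact le_add_of_nonneg_right (by positivity)
  · calc c * (a + b) ^ l * a ≤ (c + 1) * ((1 + t) * a) ^ l * a := by
          gcongr <;> linarith
      _ = (c + 1) * (1 + t) ^ l * a ^ (l + 1) := by rw [mul_pow]; ring
      _ ≤ b ^ (l + 1) + (c + 1) * (1 + t) ^ l * a ^ (l + 1) :=
        le_add_of_nonneg_left (by positivity)

lemma im_mul_I_pow (w : ℂ) (j : ℕ) :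
    (w.im * I) ^ (4 * j + 2) = ((-|w.im| ^ (4 * j + 2) : ℝ) : ℂ) := by
  have hI : I ^ (4 * j + 2) = -1 := by rw [pow_add, pow_mul, I_pow_four, one_pow, I_sq, one_mul]
  have heven : Even (4 * j + 2) := ⟨2 * j + 1, by omega⟩
  rw [mul_pow, hI, heven.pow_abs, ofReal_neg, ofReal_pow, mul_neg_one]

/- Since `4 j + 2` is `2` modulo `4`, on the imaginary axis `-Re (w ^ (4 j + 2))` is
`|Im w| ^ (4 j + 2)` and `Im (w ^ (4 j + 2))` vanishes. -/
lemma exists_abs_im_pow_le {c : ℝ} (hc : 0 ≤ c) (j : ℕ) : ∃ K : ℝ, 0 < K ∧ ∀ w : ℂ,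
    |w.im| ^ (4 * j + 2) ≤ 2 * (-(w ^ (4 * j + 2)).re - c * |(w ^ (4 * j + 2)).im|)
      + K * |w.re| ^ (4 * j + 2) := by
  obtain ⟨K, hK, hle⟩ := exists_mul_add_pow_mul_le
    (c := 2 * (c + 1) * ((4 * j + 1 : ℕ) + 1)) (by positivity) (4 * j + 1)
  refine ⟨K, hK, fun w => ?_⟩
  have hclose : ‖w ^ (4 * j + 2) - (w.im * I) ^ (4 * j + 2)‖ ≤
      ((4 * j + 1 : ℕ) + 1) * (|w.re| + |w.im|) ^ (4 * j + 1) * |w.re| := by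
    have h := norm_pow_succ_sub_pow_succ_le (x := w) (y := w.im * I)
      (norm_le_abs_re_add_abs_im w) (by simp) (4 * j + 1)
    rwa [sub_eq_iff_eq_add.mpr (re_add_im w).symm, norm_real, Real.norm_eq_abs] at h
  set m := 4 * j + 2
  rw [im_mul_I_pow] at hclose
  have hre := (re_le_norm _).trans hclose
  have him := (abs_im_le_norm _).trans hclose
  rw [sub_re, ofReal_re] at hre
  rw [sub_im, ofReal_im, sub_zero] at him
  have hmain := hle |w.re| |w.im| (abs_nonneg _) (abs_nonneg _)
  have him' := mul_le_mul_of_nonneg_left him hc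
  linarith

lemma lintegral_ofReal_Ioo_eq_intervalIntegral {g : ℝ → ℝ} (hg : Continuous g)
    (hg0 : ∀ θ, 0 ≤ g θ) {a b : ℝ} (hab : a ≤ b) :
    ∫⁻ θ in Ioo a b, ENNReal.ofReal (g θ) = ENNReal.ofReal (∫ θ in a..b, g θ) := by
  rw [intervalIntegral.integral_of_le hab, integral_Ioc_eq_integral_Ioo,
    ofReal_integral_eq_lintegral_ofReal]
  · exact (hg.intervalIntegrable a b).1.mono_set Ioo_subset_Ioc_self
  · exact Filter.Eventually.of_forall hg0

/- M. Riesz's inequality on a Lipschitz curve: the mean value of `f ^ (4 j + 2)` is nonnegative. -/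
lemma exists_lintegral_im_sawtooth_le (L : ℝ≥0) (j : ℕ) : ∃ K : ℝ, 0 < K ∧
    ∀ (R : ℝ) (_ : 1 < R) (f : ℂ → ℂ) (_ : DifferentiableOn ℂ f (ball 0 R)) (_ : (f 0).im = 0)
      (h : ℝ → ℝ) (_ : LipschitzWith L h) (_ : ∀ θ, 0 ≤ h θ) (_ : h (-π) = h π),
    ∫⁻ θ in Ioo (-π) π, ENNReal.ofReal (|(f (sawtooth h θ)).im| ^ (4 * j + 2)) ≤
      ENNReal.ofReal K *
        ∫⁻ θ in Ioo (-π) π, ENNReal.ofReal (|(f (sawtooth h θ)).re| ^ (4 * j + 2)) := by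
  obtain ⟨K, hK, hpow⟩ := exists_abs_im_pow_le L.coe_nonneg j
  refine ⟨K, hK, fun R hR f hf hf0 h hL h0 hper => ?_⟩
  set m := 4 * j + 2
  have hfm : DifferentiableOn ℂ (fun z => f z ^ m) (ball 0 R) := hf.pow m
  have hmean : 0 ≤ ∫ θ in -π..π,
      ((f (sawtooth h θ) ^ m).re - deriv h θ * (f (sawtooth h θ) ^ m).im) := by
    have heven : Even m := ⟨2 * j + 1, by omega⟩
    have hpos : 0 ≤ (f 0 ^ m).re := by
      rw [← re_add_im (f 0), hf0, ofReal_zero, zero_mul, add_zero, ← ofReal_pow, ofReal_re]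
      exact heven.pow_nonneg _
    rw [integral_re_sawtooth_eq hR hfm hL h0 hper]
    positivity
  have hf_curve := continuous_comp_sawtooth hf.continuousOn hR hL h0
  have hre : Continuous fun θ => |(f (sawtooth h θ)).re| ^ m :=
    (continuous_re.comp hf_curve).abs.pow m
  have him : Continuous fun θ => |(f (sawtooth h θ)).im| ^ m :=
    (continuous_im.comp hf_curve).abs.pow m
  have hpi : -π ≤ π := by linarith [Real.pi_pos]
  have hpointwise (θ : ℝ) : |(f (sawtooth h θ)).im| ^ m ≤ K * |(f (sawtooth h θ)).re| ^ m -
      2 * ((f (sawtooth h θ) ^ m).re - deriv h θ * (f (sawtooth h θ) ^ m).im) := by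
    have hderiv : |deriv h θ| * |(f (sawtooth h θ) ^ m).im| ≤ L * |(f (sawtooth h θ) ^ m).im| := by
      gcongr
      exact norm_deriv_le_of_lipschitz hL
    rw [← abs_mul] at hderiv
    linarith [hpow (f (sawtooth h θ)), neg_abs_le (deriv h θ * (f (sawtooth h θ) ^ m).im)]
  have hmean_int := intervalIntegrable_re_sawtooth hfm.continuousOn hR hL h0 (-π) π
  rw [lintegral_ofReal_Ioo_eq_intervalIntegral him (fun θ => by positivity) hpi,
    lintegral_ofReal_Ioo_eq_intervalIntegral hre (fun θ => by positivity) hpi,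
    ← ENNReal.ofReal_mul hK.le]
  refine ENNReal.ofReal_le_ofReal ((intervalIntegral.integral_mono_on hpi
    (him.intervalIntegrable _ _) (((hre.intervalIntegrable _ _).const_mul K).sub
      (hmean_int.const_mul 2)) fun θ _ => hpointwise θ).trans ?_)
  rw [intervalIntegral.integral_sub ((hre.intervalIntegrable _ _).const_mul K)
    (hmean_int.const_mul 2), intervalIntegral.integral_const_mul,
    intervalIntegral.integral_const_mul]
  linarith

end PowerInequality

section GoodAngles

open Metric Complex
open scoped Real

lemma isOpen_setOf_lt_of_lowerSemicontinuousOn {α : Type*} [TopologicalSpace α] {g : α → ℝ}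
    {s : Set α} (hs : IsOpen s) (hg : LowerSemicontinuousOn g s) (l : ℝ) :
    IsOpen {x | x ∈ s ∧ l < g x} := by
  refine isOpen_iff_mem_nhds.mpr fun x hx => ?_
  rw [← hs.nhdsWithin_eq hx.1]
  exact Filter.inter_mem self_mem_nhdsWithin (hg x hx.1 l hx.2)

lemma ofReal_pow_mul_measure_le_setLIntegral {α : Type*} [MeasurableSpace α] {μ : Measure α}
    {s : Set α} (hs : MeasurableSet s) {g : α → ℝ} {l : ℝ} (hl : 0 ≤ l) (hg : ∀ x ∈ s, l ≤ g x)
    (m : ℕ) :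
    ENNReal.ofReal (l ^ m) * μ s ≤ ∫⁻ x in s, ENNReal.ofReal (g x ^ m) ∂μ := by
  rw [← setLIntegral_const]
  refine setLIntegral_mono' hs fun x hx => ?_
  gcongr
  exact hg x hx

lemma exists_mem_abs_sub_le_of_volume_diff_lt {A : Set ℝ} {a b δ : ℝ} (hδ : 2 * δ ≤ b - a)
    (hvol : volume (Ioo a b \ A) < ENNReal.ofReal δ) {x : ℝ} (hx : x ∈ Ioo a b) :
    ∃ t ∈ A, |x - t| ≤ δ := by
  by_contra! hfar
  have hlong (c : ℝ) (hsub : Ioo c (c + δ) ⊆ Ioo a b) : ∃ t ∈ Ioo c (c + δ), δ < |x - t| := by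
    by_contra! hnear
    have hdisj : Ioo c (c + δ) ⊆ Ioo a b \ A := fun t ht =>
      ⟨hsub ht, fun htA => (hfar t htA).not_ge (hnear t ht)⟩
    have hle := measure_mono (μ := volume) hdisj
    rw [Real.volume_Ioo, add_sub_cancel_left] at hle
    exact hle.not_gt hvol
  rcases le_total x ((a + b) / 2) with hleft | hright
  · obtain ⟨t, ht, hfar_t⟩ := hlong x (Ioo_subset_Ioo hx.1.le (by linarith))
    rw [abs_of_neg (by linarith [ht.1])] at hfar_t
    linarith [ht.2]
  · obtain ⟨t, ht, hfar_t⟩ := hlong (x - δ) (Ioo_subset_Ioo (by linarith) (by linarith [hx.2]))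
    rw [abs_of_pos (by linarith [ht.2])] at hfar_t
    linarith [ht.1]

lemma half_le_one_sub_exp_neg {x : ℝ} (h0 : 0 ≤ x) (h1 : x ≤ 1) :
    x / 2 ≤ 1 - Real.exp (-x) := by
  have hexp : Real.exp (-x) ≤ 1 / (1 + x) := by
    rw [Real.exp_neg, ← one_div]
    exact one_div_le_one_div_of_le (by linarith) (by linarith [Real.add_one_le_exp x])
  have hfrac : 1 / (1 + x) ≤ 1 - x / 2 := by
    rw [div_le_iff₀ (by linarith)]
    nlinarith
  linarith

/-- The angles `θ` for which the nontangential maximal function of `v` is at most `l` at both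
`exp (θ I)` and its conjugate; the symmetry closes up the sawtooth curve built over this set. -/
def goodAngles (v : ℂ → ℝ) (l : ℝ) : Set ℝ :=
  {θ | θ ∈ Ioo (-π) π ∧ Ntang v (circleMap 0 1 θ) ≤ l ∧ Ntang v (circleMap 0 1 (-θ)) ≤ l}

/-- The height of the sawtooth curve over the good angles. The slope `8` keeps the curve inside the
Stolz regions with vertices at the good angles. -/
noncomputable def goodHeight (v : ℂ → ℝ) (l : ℝ) (θ : ℝ) : ℝ := 8 * infDist θ (goodAngles v l)

variable {v : ℂ → ℝ} {R l θ : ℝ}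

lemma neg_mem_Ioo_neg_self {a x : ℝ} (hx : x ∈ Ioo (-a) a) : -x ∈ Ioo (-a) a :=
  ⟨neg_lt_neg hx.2, neg_lt.mp hx.1⟩

lemma neg_mem_goodAngles (hθ : θ ∈ goodAngles v l) : -θ ∈ goodAngles v l :=
  ⟨neg_mem_Ioo_neg_self hθ.1, hθ.2.2, by simpa only [neg_neg] using hθ.2.1⟩

lemma goodAngles_subset : goodAngles v l ⊆ Ioo (-π) π := fun _ hθ => hθ.1

lemma Ioo_diff_goodAngles : Ioo (-π) π \ goodAngles v l =
    {θ | θ ∈ Ioo (-π) π ∧ l < Ntang v (circleMap 0 1 θ)} ∪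
      -{θ | θ ∈ Ioo (-π) π ∧ l < Ntang v (circleMap 0 1 θ)} := by
  have hneg (θ : ℝ) : -θ ∈ Ioo (-π) π ↔ θ ∈ Ioo (-π) π :=
    ⟨fun h => by simpa only [neg_neg] using neg_mem_Ioo_neg_self h, neg_mem_Ioo_neg_self⟩
  ext θ
  simp only [goodAngles, mem_sdiff, mem_union, mem_neg, mem_ofPred_eq, hneg, ← not_le]
  tauto

lemma measurableSet_setOf_lt_ntang (hv : ContinuousOn v (ball 0 R)) (hR : 1 < R) (l : ℝ) :
    MeasurableSet {θ | θ ∈ Ioo (-π) π ∧ l < Ntang v (circleMap 0 1 θ)} :=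
  (isOpen_setOf_lt_of_lowerSemicontinuousOn isOpen_Ioo
    (lowerSemicontinuousOn_ntang_circleMap hv one_pos hR) l).measurableSet

lemma measurableSet_goodAngles (hv : ContinuousOn v (ball 0 R)) (hR : 1 < R) (l : ℝ) :
    MeasurableSet (goodAngles v l) := by
  have hE := measurableSet_setOf_lt_ntang hv hR l
  rw [← sdiff_sdiff_cancel_left (goodAngles_subset (v := v) (l := l)), Ioo_diff_goodAngles]
  exact measurableSet_Ioo.diff (hE.union hE.neg)

lemma ofReal_pow_mul_volume_diff_goodAngles_le (hv : ContinuousOn v (ball 0 R)) (hR : 1 < R)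
    (hl : 0 ≤ l) (m : ℕ) :
    ENNReal.ofReal (l ^ m) * volume (Ioo (-π) π \ goodAngles v l) ≤
      2 * ∫⁻ θ in Ioo (-π) π, ENNReal.ofReal (min (Ntang v (circleMap 0 1 θ)) l ^ m) := by
  set E := {θ | θ ∈ Ioo (-π) π ∧ l < Ntang v (circleMap 0 1 θ)}
  have hvol : volume (Ioo (-π) π \ goodAngles v l) ≤ 2 * volume E := by
    rw [Ioo_diff_goodAngles, two_mul]
    exact (measure_union_le _ _).trans_eq (by rw [Measure.measure_neg])
  have hcheb : ENNReal.ofReal (l ^ m) * volume E ≤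
      ∫⁻ θ in Ioo (-π) π, ENNReal.ofReal (min (Ntang v (circleMap 0 1 θ)) l ^ m) :=
    (ofReal_pow_mul_measure_le_setLIntegral (measurableSet_setOf_lt_ntang hv hR l) hl
      (fun θ hθ => le_min hθ.2.le le_rfl) m).trans (lintegral_mono_set fun θ hθ => hθ.1)
  calc ENNReal.ofReal (l ^ m) * volume (Ioo (-π) π \ goodAngles v l)
      ≤ ENNReal.ofReal (l ^ m) * (2 * volume E) := by gcongr
    _ = 2 * (ENNReal.ofReal (l ^ m) * volume E) := by ring
    _ ≤ _ := by gcongr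

lemma goodHeight_nonneg (v : ℂ → ℝ) (l θ : ℝ) : 0 ≤ goodHeight v l θ :=
  mul_nonneg (by norm_num) infDist_nonneg

lemma lipschitzWith_goodHeight (v : ℂ → ℝ) (l : ℝ) : LipschitzWith 8 (goodHeight v l) := by
  refine LipschitzWith.of_dist_le_mul fun x y => ?_
  have hdist := (lipschitz_infDist_pt (goodAngles v l)).dist_le_mul x y
  rw [Real.dist_eq, NNReal.coe_one, one_mul] at hdist
  rw [Real.dist_eq, goodHeight, goodHeight, ← mul_sub, abs_mul, abs_of_pos (by norm_num)]
  exact mul_le_mul_of_nonneg_left hdist (by norm_num)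

lemma goodHeight_neg (v : ℂ → ℝ) (l θ : ℝ) : goodHeight v l (-θ) = goodHeight v l θ := by
  have himage : Neg.neg '' goodAngles v l = goodAngles v l := by
    rw [image_neg_eq_neg]
    exact Subset.antisymm
      (fun θ hθ => by simpa only [neg_neg] using neg_mem_goodAngles (mem_neg.mp hθ))
      (fun θ hθ => mem_neg.mpr (neg_mem_goodAngles hθ))
  rw [goodHeight, goodHeight]
  nth_rw 1 [← himage]
  rw [infDist_image isometry_neg]

lemma sawtooth_goodHeight_eq (hθ : θ ∈ goodAngles v l) :
    sawtooth (goodHeight v l) θ = circleMap 0 1 θ := by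
  rw [sawtooth, goodHeight, infDist_zero_of_mem hθ, mul_zero, neg_zero, Real.exp_zero]

lemma abs_comp_sawtooth_le_ntang (hv : ContinuousOn v (ball 0 R)) (hR : 1 < R)
    (hθ : θ ∈ goodAngles v l) :
    |v (sawtooth (goodHeight v l) θ)| ≤ Ntang v (circleMap 0 1 θ) := by
  rw [sawtooth_goodHeight_eq hθ]
  exact abs_le_ntang hv (circleMap_zero_mem_ball zero_le_one hR θ)
    (circleMap_ne_center one_ne_zero) (by rw [norm_circleMap_zero, abs_one])

/- Off the closure of the good angles the point of the curve lies in the Stolz region of any good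
angle whose distance is less than twice the infimum. -/
lemma abs_comp_sawtooth_le (hv : ContinuousOn v (ball 0 R)) (hR : 1 < R) (hθ : θ ∈ Ioo (-π) π)
    (hne : (goodAngles v l).Nonempty) (hnear : infDist θ (goodAngles v l) ≤ 1 / 8) :
    |v (sawtooth (goodHeight v l) θ)| ≤ l := by
  have hcont : Continuous fun θ => v (sawtooth (goodHeight v l) θ) :=
    continuous_comp_sawtooth hv hR (lipschitzWith_goodHeight v l) (goodHeight_nonneg v l)
  rcases (infDist_nonneg (x := θ) (s := goodAngles v l)).eq_or_lt with hzero | hpos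
  · have hclosure : θ ∈ closure (goodAngles v l) :=
      (mem_closure_iff_infDist_zero hne).mpr hzero.symm
    exact closure_minimal (fun t ht => (abs_comp_sawtooth_le_ntang hv hR ht).trans ht.2.1)
      (isClosed_le hcont.abs continuous_const) hclosure
  · obtain ⟨t, ht, htθ⟩ := (infDist_lt_iff hne).mp
      (show infDist θ (goodAngles v l) < 2 * infDist θ (goodAngles v l) by linarith)
    rw [Real.dist_eq, abs_sub_comm] at htθ
    have hheight : goodHeight v l θ = 8 * infDist θ (goodAngles v l) := rfl
    have hexp := half_le_one_sub_exp_neg (goodHeight_nonneg v l θ) (by linarith)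
    have hmem : sawtooth (goodHeight v l) θ ∈ Stolz (circleMap 0 1 t) :=
      circleMap_mem_stolz ht.1 hθ (Real.exp_pos _) (by linarith) (by linarith)
    exact (abs_le_ntang_of_mem_stolz hv (circleMap_zero_mem_ball zero_le_one hR t)
      (circleMap_ne_center one_ne_zero) hmem).trans ht.2.1

lemma lintegral_comp_sawtooth_le (hv : ContinuousOn v (ball 0 R)) (hR : 1 < R) (m : ℕ)
    (hne : (goodAngles v l).Nonempty)
    (hnear : ∀ θ ∈ Ioo (-π) π, infDist θ (goodAngles v l) ≤ 1 / 8) :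
    ∫⁻ θ in Ioo (-π) π, ENNReal.ofReal (|v (sawtooth (goodHeight v l) θ)| ^ m) ≤
      (∫⁻ θ in Ioo (-π) π, ENNReal.ofReal (min (Ntang v (circleMap 0 1 θ)) l ^ m)) +
        ENNReal.ofReal (l ^ m) * volume (Ioo (-π) π \ goodAngles v l) := by
  have hA := measurableSet_goodAngles hv hR l
  rw [← lintegral_inter_add_sdiff _ _ hA, inter_eq_self_of_subset_right goodAngles_subset,
    ← setLIntegral_const]
  refine add_le_add ?_ ?_
  · refine (setLIntegral_mono' hA fun θ hθ => ?_).trans (lintegral_mono_set goodAngles_subset)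
    gcongr
    exact le_min (abs_comp_sawtooth_le_ntang hv hR hθ)
      (abs_comp_sawtooth_le hv hR hθ.1 hne (hnear θ hθ.1))
  · refine setLIntegral_mono' (measurableSet_Ioo.diff hA) fun θ hθ => ?_
    gcongr
    exact abs_comp_sawtooth_le hv hR hθ.1 hne (hnear θ hθ.1)

lemma exists_goodAngles_of_volume_diff_lt
    (hvol : volume (Ioo (-π) π \ goodAngles v l) < ENNReal.ofReal (1 / 8)) :
    (goodAngles v l).Nonempty ∧ ∀ θ ∈ Ioo (-π) π, infDist θ (goodAngles v l) ≤ 1 / 8 := by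
  have hpi := Real.pi_gt_three
  have hdense (θ : ℝ) (hθ : θ ∈ Ioo (-π) π) : ∃ t ∈ goodAngles v l, |θ - t| ≤ 1 / 8 :=
    exists_mem_abs_sub_le_of_volume_diff_lt (by linarith) hvol hθ
  refine ⟨?_, fun θ hθ => ?_⟩
  · obtain ⟨t, ht, -⟩ := hdense 0 ⟨by linarith, by linarith⟩
    exact ⟨t, ht⟩
  · obtain ⟨t, ht, hle⟩ := hdense θ hθ
    exact (infDist_le_dist_of_mem ht).trans (by rwa [Real.dist_eq])

lemma mul_volume_inter_le_of_le_volume_diff (V : Set ℝ) {A : Set ℝ} {c T : ENNReal}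
    (hbad : c * volume (Ioo (-π) π \ A) ≤ 2 * T)
    (hbig : ENNReal.ofReal (1 / 8) ≤ volume (Ioo (-π) π \ A)) :
    c * volume (V ∩ Ioo (-π) π) ≤ ENNReal.ofReal (32 * π) * T := by
  have hvol : volume (V ∩ Ioo (-π) π) ≤ ENNReal.ofReal (16 * π) * volume (Ioo (-π) π \ A) :=
    calc volume (V ∩ Ioo (-π) π) ≤ volume (Ioo (-π) π) := measure_mono inter_subset_right
      _ = ENNReal.ofReal (16 * π) * ENNReal.ofReal (1 / 8) := by
        rw [Real.volume_Ioo, ← ENNReal.ofReal_mul (by positivity)]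
        ring_nf
      _ ≤ _ := by gcongr
  calc c * volume (V ∩ Ioo (-π) π)
      ≤ c * (ENNReal.ofReal (16 * π) * volume (Ioo (-π) π \ A)) := by gcongr
    _ = ENNReal.ofReal (16 * π) * (c * volume (Ioo (-π) π \ A)) := by ring
    _ ≤ ENNReal.ofReal (16 * π) * (2 * T) := by gcongr
    _ = ENNReal.ofReal (32 * π) * T := by
      rw [← mul_assoc, ← ENNReal.ofReal_ofNat 2, ← ENNReal.ofReal_mul (by positivity)]
      ring_nf

lemma measure_inter_le_diff_add_inter {α : Type*} [MeasurableSpace α] (μ : Measure α)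
    (V S A : Set α) : μ (V ∩ S) ≤ μ (S \ A) + μ (V ∩ A) := by
  refine (measure_mono fun x hx => ?_).trans (measure_union_le _ _)
  exact (em (x ∈ A)).elim (fun hA => Or.inr ⟨hx.1, hA⟩) fun hA => Or.inl ⟨hx.2, hA⟩

lemma ofReal_pow_mul_volume_inter_goodAngles_le {w : ℂ → ℝ} (hw : ContinuousOn w (ball 0 R))
    (hv : ContinuousOn v (ball 0 R)) (hR : 1 < R) {t : ℝ} (ht : 0 ≤ t) (m : ℕ) :
    ENNReal.ofReal (t ^ m) * volume ({θ | t < |w (circleMap 0 1 θ)|} ∩ goodAngles v l) ≤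
      ∫⁻ θ in Ioo (-π) π, ENNReal.ofReal (|w (sawtooth (goodHeight v l) θ)| ^ m) := by
  have hcont : Continuous fun θ => w (circleMap 0 1 θ) :=
    continuous_comp_circleMap hw zero_le_one hR
  have hmeas : MeasurableSet {θ | t < |w (circleMap 0 1 θ)|} :=
    measurableSet_lt measurable_const hcont.abs.measurable
  refine (ofReal_pow_mul_measure_le_setLIntegral (hmeas.inter (measurableSet_goodAngles hv hR l))
    ht (fun θ hθ => ?_) m).trans
    (lintegral_mono_set (inter_subset_right.trans goodAngles_subset))
  rw [sawtooth_goodHeight_eq hθ.2]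
  exact (show t < |w (circleMap 0 1 θ)| from hθ.1).le

/- If few angles are bad, the inequality for the sawtooth curve over the good angles applies;
otherwise the right-hand side is already comparable to the full measure. -/
lemma exists_ofReal_pow_mul_measure_im_le (j : ℕ) : ∃ C : ℝ, 0 < C ∧
    ∀ (R : ℝ) (_ : 1 < R) (f : ℂ → ℂ) (_ : DifferentiableOn ℂ f (ball 0 R)) (_ : (f 0).im = 0)
      (l : ℝ) (_ : 0 < l),
    ENNReal.ofReal (l ^ (4 * j + 2)) *
        (volume.restrict (Ioo (-π) π)) {θ | l < |(f (circleMap 0 1 θ)).im|} ≤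
      ENNReal.ofReal C * ∫⁻ θ in Ioo (-π) π,
        ENNReal.ofReal (min (Ntang (fun z => (f z).re) (circleMap 0 1 θ)) l ^ (4 * j + 2)) := by
  obtain ⟨K, hK, hsawtooth⟩ := exists_lintegral_im_sawtooth_le 8 j
  refine ⟨32 * π + (2 + 3 * K), by positivity, fun R hR f hf hf0 l hl => ?_⟩
  set m := 4 * j + 2
  have hre : ContinuousOn (fun z => (f z).re) (ball 0 R) :=
    continuous_re.comp_continuousOn hf.continuousOn
  have him : ContinuousOn (fun z => (f z).im) (ball 0 R) :=
    continuous_im.comp_continuousOn hf.continuousOn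
  set V := {θ | l < |(f (circleMap 0 1 θ)).im|}
  set A := goodAngles (fun z => (f z).re) l
  set T := ∫⁻ θ in Ioo (-π) π,
    ENNReal.ofReal (min (Ntang (fun z => (f z).re) (circleMap 0 1 θ)) l ^ m)
  have hbad : ENNReal.ofReal (l ^ m) * volume (Ioo (-π) π \ A) ≤ 2 * T :=
    ofReal_pow_mul_volume_diff_goodAngles_le hre hR hl.le m
  rw [Measure.restrict_apply' measurableSet_Ioo, ENNReal.ofReal_add (by positivity) (by positivity),
    add_mul]
  rcases le_or_gt (ENNReal.ofReal (1 / 8)) (volume (Ioo (-π) π \ A)) with hbig | hsmall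
  · exact le_add_of_le_left (mul_volume_inter_le_of_le_volume_diff V hbad hbig)
  · refine le_add_of_le_right ?_
    obtain ⟨hne, hnear⟩ := exists_goodAngles_of_volume_diff_lt hsmall
    set h := goodHeight (fun z => (f z).re) l
    have hcurve_re : ∫⁻ θ in Ioo (-π) π, ENNReal.ofReal (|(f (sawtooth h θ)).re| ^ m) ≤ 3 * T :=
      (lintegral_comp_sawtooth_le hre hR m hne hnear).trans
        ((add_le_add_right hbad T).trans_eq (by ring))
    have hcurve_im := hsawtooth R hR f hf hf0 h (lipschitzWith_goodHeight _ l)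
      (goodHeight_nonneg _ l) (goodHeight_neg _ l π)
    calc ENNReal.ofReal (l ^ m) * volume (V ∩ Ioo (-π) π)
        ≤ ENNReal.ofReal (l ^ m) * volume (Ioo (-π) π \ A) +
            ENNReal.ofReal (l ^ m) * volume (V ∩ A) := by
          rw [← mul_add]
          gcongr
          exact measure_inter_le_diff_add_inter volume V (Ioo (-π) π) A
      _ ≤ 2 * T + ENNReal.ofReal K * (3 * T) :=
          add_le_add hbad ((ofReal_pow_mul_volume_inter_goodAngles_le him hre hR hl.le m).trans
            (hcurve_im.trans (mul_le_mul_right hcurve_re _)))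
      _ = ENNReal.ofReal (2 + 3 * K) * T := by
          rw [ENNReal.ofReal_add (by norm_num) (by positivity), ENNReal.ofReal_mul (by norm_num),
            ENNReal.ofReal_ofNat, ENNReal.ofReal_ofNat]
          ring

end GoodAngles

section LayerCake

variable {α : Type*} [MeasurableSpace α] {μ : Measure α}

lemma lintegral_Ioc_rpow {q N : ℝ} (hq : 0 < q) (hN : 0 ≤ N) :
    ∫⁻ t in Ioc 0 N, ENNReal.ofReal (t ^ (q - 1)) = ENNReal.ofReal (N ^ q / q) := by
  have hint : IntegrableOn (fun t : ℝ => t ^ (q - 1)) (Ioc 0 N) := by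
    rw [← intervalIntegrable_iff_integrableOn_Ioc_of_le hN]
    exact intervalIntegral.intervalIntegrable_rpow' (by linarith)
  rw [← ofReal_integral_eq_lintegral_ofReal hint, ← intervalIntegral.integral_of_le hN,
    integral_rpow (Or.inl (by linarith)), sub_add_cancel, Real.zero_rpow hq.ne', sub_zero]
  filter_upwards [ae_restrict_mem measurableSet_Ioc] with t ht
  exact Real.rpow_nonneg ht.1.le _

lemma lintegral_Ioi_rpow {q N : ℝ} (hq : 0 < q) (hN : 0 < N) :
    ∫⁻ t in Ioi N, ENNReal.ofReal (t ^ (-q - 1)) = ENNReal.ofReal (N ^ (-q) / q) := by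
  rw [← ofReal_integral_eq_lintegral_ofReal (integrableOn_Ioi_rpow_of_lt (by linarith) hN),
    integral_Ioi_rpow_of_lt (by linarith) hN, sub_add_cancel, neg_div_neg_eq]
  filter_upwards [ae_restrict_mem measurableSet_Ioi] with t ht
  exact Real.rpow_nonneg (hN.trans ht).le _

lemma lintegral_min_pow_mul_rpow {p : ℝ} (hp : 0 < p) {m : ℕ} (hpm : p < m) {N : ℝ} (hN : 0 ≤ N) :
    ∫⁻ t in Ioi 0, ENNReal.ofReal (min N t ^ m) * ENNReal.ofReal (t ^ (p - 1 - m)) =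
      ENNReal.ofReal ((1 / p + 1 / (m - p)) * N ^ p) := by
  have hmp : 0 < m - p := sub_pos.mpr hpm
  have hbelow : ∫⁻ t in Ioc 0 N, ENNReal.ofReal (min N t ^ m) * ENNReal.ofReal (t ^ (p - 1 - m)) =
      ENNReal.ofReal (N ^ p / p) := by
    rw [← lintegral_Ioc_rpow hp hN]
    refine setLIntegral_congr_fun measurableSet_Ioc fun t ht => ?_
    rw [min_eq_right ht.2, ← ENNReal.ofReal_mul (pow_nonneg ht.1.le m), ← Real.rpow_natCast,
      ← Real.rpow_add ht.1]
    ring_nf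
  have habove : ∫⁻ t in Ioi N, ENNReal.ofReal (min N t ^ m) * ENNReal.ofReal (t ^ (p - 1 - m)) =
      ENNReal.ofReal (N ^ p / (m - p)) := by
    have hmin : ∫⁻ t in Ioi N, ENNReal.ofReal (min N t ^ m) * ENNReal.ofReal (t ^ (p - 1 - m)) =
        ∫⁻ t in Ioi N, ENNReal.ofReal (N ^ m) * ENNReal.ofReal (t ^ (-(m - p) - 1)) := by
      refine setLIntegral_congr_fun measurableSet_Ioi fun t ht => ?_
      rw [min_eq_left (le_of_lt ht)]
      ring_nf
    rw [hmin, lintegral_const_mul' _ _ ENNReal.ofReal_ne_top]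
    rcases hN.eq_or_lt with rfl | hN
    · rw [zero_pow (by rintro rfl; simp at hpm; linarith), Real.zero_rpow hp.ne', zero_div,
        ENNReal.ofReal_zero, zero_mul]
    · rw [lintegral_Ioi_rpow hmp hN, ← ENNReal.ofReal_mul (pow_nonneg hN.le m), ← mul_div_assoc,
        ← Real.rpow_natCast, ← Real.rpow_add hN]
      ring_nf
  rw [← Ioc_union_Ioi_eq_Ioi hN, lintegral_union measurableSet_Ioi Ioc_disjoint_Ioi_same, hbelow,
    habove, ← ENNReal.ofReal_add (by positivity) (by positivity)]
  ring_nf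

lemma lintegral_rpow_le_of_pow_mul_measure_le [SFinite μ] {p : ℝ} (hp : 0 < p) {m : ℕ}
    (hpm : p < m) {g n : α → ℝ} (hg0 : ∀ x, 0 ≤ g x) (hg : AEMeasurable g μ) (hn0 : ∀ x, 0 ≤ n x)
    (hn : AEMeasurable n μ) {C : ENNReal} (hC : C ≠ ⊤)
    (h : ∀ t > 0, ENNReal.ofReal (t ^ m) * μ {x | t < g x} ≤
      C * ∫⁻ x, ENNReal.ofReal (min (n x) t ^ m) ∂μ) :
    ∫⁻ x, ENNReal.ofReal (g x ^ p) ∂μ ≤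
      ENNReal.ofReal p * C * ENNReal.ofReal (1 / p + 1 / (m - p)) *
        ∫⁻ x, ENNReal.ofReal (n x ^ p) ∂μ := by
  have : 0 < m - p := sub_pos.mpr hpm
  have hlevel (t : ℝ) (ht : t ∈ Ioi 0) : μ {x | t < g x} * ENNReal.ofReal (t ^ (p - 1)) ≤
      C * ∫⁻ x, ENNReal.ofReal (min (n x) t ^ m) * ENNReal.ofReal (t ^ (p - 1 - m)) ∂μ := by
    have hsplit : ENNReal.ofReal (t ^ (p - 1)) =
        ENNReal.ofReal (t ^ m) * ENNReal.ofReal (t ^ (p - 1 - m)) := by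
      rw [← ENNReal.ofReal_mul (pow_nonneg ht.le m), ← Real.rpow_natCast, ← Real.rpow_add ht]
      ring_nf
    rw [lintegral_mul_const' _ _ ENNReal.ofReal_ne_top, hsplit, ← mul_assoc, ← mul_assoc,
      mul_comm (μ _)]
    exact mul_le_mul_left (h t ht) _
  rw [lintegral_rpow_eq_lintegral_meas_lt_mul μ (Filter.Eventually.of_forall hg0) hg hp]
  calc ENNReal.ofReal p * ∫⁻ t in Ioi 0, μ {x | t < g x} * ENNReal.ofReal (t ^ (p - 1))
      ≤ ENNReal.ofReal p * ∫⁻ t in Ioi 0, C *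
          ∫⁻ x, ENNReal.ofReal (min (n x) t ^ m) * ENNReal.ofReal (t ^ (p - 1 - m)) ∂μ := by
        gcongr ENNReal.ofReal p * ?_
        exact setLIntegral_mono' measurableSet_Ioi hlevel
    _ = ENNReal.ofReal p * C * ∫⁻ x, ∫⁻ t in Ioi 0,
          ENNReal.ofReal (min (n x) t ^ m) * ENNReal.ofReal (t ^ (p - 1 - m)) ∂volume ∂μ := by
        rw [lintegral_const_mul' _ _ hC, ← mul_assoc, lintegral_lintegral_swap]
        exact ((hn.comp_snd.min measurable_fst.aemeasurable).pow_const m).ennreal_ofReal.mul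
          (measurable_fst.pow_const _).ennreal_ofReal.aemeasurable
    _ = _ := by
        simp_rw [lintegral_min_pow_mul_rpow hp hpm (hn0 _),
          ENNReal.ofReal_mul (show 0 ≤ 1 / p + 1 / (m - p) by positivity)]
        rw [lintegral_const_mul' _ _ ENNReal.ofReal_ne_top, ← mul_assoc]

end LayerCake

section LowerBound

open Metric Complex
open scoped Real

lemma norm_rpow_le_abs_re_add_abs_im {p : ℝ} (hp : 0 ≤ p) (z : ℂ) :
    ‖z‖ ^ p ≤ 2 ^ p * (|z.re| ^ p + |z.im| ^ p) := by
  have hmax : ‖z‖ ≤ 2 * max |z.re| |z.im| := by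
    linarith [norm_le_abs_re_add_abs_im z, le_max_left |z.re| |z.im|, le_max_right |z.re| |z.im|]
  refine (Real.rpow_le_rpow (norm_nonneg z) hmax hp).trans ?_
  rw [Real.mul_rpow zero_le_two (le_max_of_le_left (abs_nonneg _))]
  gcongr
  rcases max_choice |z.re| |z.im| with h | h <;> rw [h]
  · exact le_add_of_nonneg_right (Real.rpow_nonneg (abs_nonneg _) p)
  · exact le_add_of_nonneg_left (Real.rpow_nonneg (abs_nonneg _) p)

lemma aemeasurable_ntang_circleMap {v : ℂ → ℝ} {R : ℝ} (hv : ContinuousOn v (ball 0 R))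
    (hR : 1 < R) :
    AEMeasurable (fun θ => Ntang v (circleMap 0 1 θ)) (volume.restrict (Ioo (-π) π)) :=
  aemeasurable_restrict_of_lowerSemicontinuousOn measurableSet_Ioo
    (lowerSemicontinuousOn_ntang_circleMap hv one_pos hR)

lemma exists_lintegral_im_rpow_le {p : ℝ} (hp : 0 < p) : ∃ C : ℝ, 0 < C ∧
    ∀ (R : ℝ) (_ : 1 < R) (f : ℂ → ℂ) (_ : DifferentiableOn ℂ f (ball 0 R)) (_ : (f 0).im = 0),
    ∫⁻ θ in Ioo (-π) π, ENNReal.ofReal (|(f (circleMap 0 1 θ)).im| ^ p) ≤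
      ENNReal.ofReal C * ∫⁻ θ in Ioo (-π) π,
        ENNReal.ofReal (Ntang (fun z => (f z).re) (circleMap 0 1 θ) ^ p) := by
  obtain ⟨C, hC, hgood⟩ := exists_ofReal_pow_mul_measure_im_le ⌈p⌉₊
  have hpm : p < (4 * ⌈p⌉₊ + 2 : ℕ) := by
    push_cast
    linarith [Nat.le_ceil p]
  have hmp := sub_pos.mpr hpm
  set m := 4 * ⌈p⌉₊ + 2
  refine ⟨p * C * (1 / p + 1 / (m - p)), by positivity, fun R hR f hf hf0 => ?_⟩
  have him : Continuous fun θ => |(f (circleMap 0 1 θ)).im| :=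
    (continuous_im.comp (continuous_comp_circleMap hf.continuousOn zero_le_one hR)).abs
  rw [ENNReal.ofReal_mul (by positivity), ENNReal.ofReal_mul hp.le]
  exact lintegral_rpow_le_of_pow_mul_measure_le hp hpm (fun θ => abs_nonneg _)
    him.aemeasurable (fun θ => ntang_nonneg _ _)
    (aemeasurable_ntang_circleMap (continuous_re.comp_continuousOn hf.continuousOn) hR)
    ENNReal.ofReal_ne_top fun t ht => hgood R hR f hf hf0 t ht

lemma exists_lintegral_norm_rpow_le {p : ℝ} (hp : 0 < p) : ∃ C : ℝ, 0 < C ∧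
    ∀ (R : ℝ) (_ : 1 < R) (f : ℂ → ℂ) (_ : DifferentiableOn ℂ f (ball 0 R)) (_ : (f 0).im = 0),
    ∫⁻ θ in Ioo (-π) π, ENNReal.ofReal (‖f (circleMap 0 1 θ)‖ ^ p) ≤
      ENNReal.ofReal C * ∫⁻ θ in Ioo (-π) π,
        ENNReal.ofReal (Ntang (fun z => (f z).re) (circleMap 0 1 θ) ^ p) := by
  obtain ⟨C, hC, him⟩ := exists_lintegral_im_rpow_le hp
  refine ⟨2 ^ p * (1 + C), by positivity, fun R hR f hf hf0 => ?_⟩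
  have hre : ContinuousOn (fun z => (f z).re) (ball 0 R) :=
    continuous_re.comp_continuousOn hf.continuousOn
  have hpointwise (θ : ℝ) : ENNReal.ofReal (‖f (circleMap 0 1 θ)‖ ^ p) ≤ ENNReal.ofReal (2 ^ p) *
      (ENNReal.ofReal (Ntang (fun z => (f z).re) (circleMap 0 1 θ) ^ p) +
        ENNReal.ofReal (|(f (circleMap 0 1 θ)).im| ^ p)) := by
    have hbound := abs_le_ntang hre (circleMap_zero_mem_ball zero_le_one hR θ)
      (circleMap_ne_center one_ne_zero) (by rw [norm_circleMap_zero, abs_one])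
    have hN := Real.rpow_nonneg (ntang_nonneg (fun z => (f z).re) (circleMap 0 1 θ)) p
    rw [← ENNReal.ofReal_add hN (by positivity), ← ENNReal.ofReal_mul (by positivity)]
    refine ENNReal.ofReal_le_ofReal ((norm_rpow_le_abs_re_add_abs_im hp.le _).trans ?_)
    gcongr
  refine (lintegral_mono hpointwise).trans ?_
  rw [lintegral_const_mul' _ _ ENNReal.ofReal_ne_top,
    lintegral_add_left' ((aemeasurable_ntang_circleMap hre hR).pow_const p).ennreal_ofReal,
    ENNReal.ofReal_mul (by positivity), ENNReal.ofReal_add zero_le_one hC.le, ENNReal.ofReal_one,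
    mul_assoc, add_mul, one_mul]
  gcongr
  exact him R hR f hf hf0

end LowerBound

section PoissonMajorant

open Metric Complex Filter
open scoped Real Topology Polynomial

/-- The function `‖h‖ ^ q` on the disc is majorized by the modulus of a holomorphic function with
the same modulus on the circle, so that it is bounded by its own Poisson integral. -/
def HasMajorant (q : ℝ) (h : ℂ → ℂ) : Prop :=
  ∃ G : ℂ → ℂ, DiffContOnCl ℂ G (ball 0 1) ∧ (∀ z, ‖z‖ < 1 → ‖h z‖ ^ q ≤ ‖G z‖) ∧
    ∀ z, ‖z‖ = 1 → ‖G z‖ = ‖h z‖ ^ q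

lemma HasMajorant.mul {q : ℝ} {h k : ℂ → ℂ} (hh : HasMajorant q h) (hk : HasMajorant q k) :
    HasMajorant q fun z => h z * k z := by
  obtain ⟨G, hG, hG_le, hG_eq⟩ := hh
  obtain ⟨H, hH, hH_le, hH_eq⟩ := hk
  refine ⟨fun z => G z • H z, hG.smul hH, fun z hz => ?_, fun z hz => ?_⟩ <;>
    simp only [smul_eq_mul, norm_mul, Real.mul_rpow (norm_nonneg _) (norm_nonneg _)]
  · exact mul_le_mul (hG_le z hz) (hH_le z hz) (by positivity) (norm_nonneg _)
  · rw [hG_eq z hz, hH_eq z hz]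

lemma hasMajorant_const (q : ℝ) (c : ℂ) : HasMajorant q fun _ => c :=
  ⟨fun _ => c ^ (q : ℂ), diffContOnCl_const, fun _ _ => (norm_cpow_real c q).ge,
    fun _ _ => norm_cpow_real c q⟩

lemma diffContOnCl_one_sub_mul_cpow {q : ℝ} (hq : 0 < q) {b : ℂ} (hb : ‖b‖ ≤ 1) :
    DiffContOnCl ℂ (fun z => (1 - b * z) ^ (q : ℂ)) (ball 0 1) := by
  have hre (z : ℂ) : 1 - ‖z‖ ≤ (1 - b * z).re := by
    have : (b * z).re ≤ ‖z‖ := (re_le_norm _).trans <| by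
      rw [norm_mul]
      exact mul_le_of_le_one_left (norm_nonneg _) hb
    simpa only [sub_re, one_re] using sub_le_sub_left this 1
  constructor
  · refine DifferentiableOn.cpow_const (by fun_prop) fun z hz => Or.inl ?_
    linarith [hre z, mem_ball_zero_iff.1 hz]
  · rw [closure_ball _ one_ne_zero]
    intro z hz
    have hpow : ContinuousAt (fun w : ℂ => w ^ (q : ℂ)) (1 - b * z) :=
      continuousAt_cpow_const_of_re_pos
        (Or.inl (by linarith [hre z, mem_closedBall_zero_iff.1 hz])) (by simpa using hq)
    exact (hpow.comp (f := fun z => 1 - b * z) (by fun_prop)).continuousWithinAt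

lemma sq_norm_one_sub_conj_mul_sub_sq_norm_sub (a z : ℂ) :
    ‖1 - (starRingEnd ℂ) a * z‖ ^ 2 - ‖z - a‖ ^ 2 = (1 - ‖z‖ ^ 2) * (1 - ‖a‖ ^ 2) := by
  simp only [Complex.sq_norm, normSq_apply, sub_re, one_re, mul_re, conj_re, conj_im, sub_im,
    one_im, mul_im]
  ring

/- A zero inside the disc is reflected in the circle. -/
lemma hasMajorant_sub_of_norm_lt_one {q : ℝ} (hq : 0 < q) {a : ℂ} (ha : ‖a‖ < 1) :
    HasMajorant q fun z => z - a := by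
  refine ⟨_, diffContOnCl_one_sub_mul_cpow hq (b := (starRingEnd ℂ) a) (by simpa using ha.le),
    fun z hz => ?_, fun z hz => ?_⟩ <;>
    rw [norm_cpow_real] <;>
    have hid := sq_norm_one_sub_conj_mul_sub_sq_norm_sub a z
  · have hprod : 0 ≤ (1 - ‖z‖ ^ 2) * (1 - ‖a‖ ^ 2) :=
      mul_nonneg (sub_nonneg.2 (pow_le_one₀ (norm_nonneg _) hz.le))
        (sub_nonneg.2 (pow_le_one₀ (norm_nonneg _) ha.le))
    exact Real.rpow_le_rpow (norm_nonneg _)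
      (le_of_sq_le_sq (by linarith) (norm_nonneg _)) hq.le
  · rw [hz] at hid
    rw [(sq_eq_sq₀ (norm_nonneg (1 - _)) (norm_nonneg (z - a))).1 (by linarith)]

lemma hasMajorant_sub_of_one_le_norm {q : ℝ} (hq : 0 < q) {a : ℂ} (ha : 1 ≤ ‖a‖) :
    HasMajorant q fun z => z - a := by
  have ha0 : a ≠ 0 := norm_pos_iff.1 (one_pos.trans_le ha)
  have hfactor : HasMajorant q fun z => 1 - a⁻¹ * z :=
    ⟨_, diffContOnCl_one_sub_mul_cpow hq (by rw [norm_inv]; exact inv_le_one_of_one_le₀ ha),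
      fun z _ => (norm_cpow_real _ q).ge, fun z _ => norm_cpow_real _ q⟩
  convert (hasMajorant_const q (-a)).mul hfactor using 2 with z
  field_simp
  ring

lemma hasMajorant_sub {q : ℝ} (hq : 0 < q) (a : ℂ) : HasMajorant q fun z => z - a :=
  (lt_or_ge ‖a‖ 1).elim (hasMajorant_sub_of_norm_lt_one hq) (hasMajorant_sub_of_one_le_norm hq)

lemma hasMajorant_eval {q : ℝ} (hq : 0 < q) (P : ℂ[X]) : HasMajorant q fun z => P.eval z := by
  have hroots (s : Multiset ℂ) : HasMajorant q
      fun z => ((s.map fun a => Polynomial.X - Polynomial.C a).prod).eval z := by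
    induction s using Multiset.induction with
    | empty => simpa using hasMajorant_const q 1
    | cons a s ih =>
      simpa only [Multiset.map_cons, Multiset.prod_cons, Polynomial.eval_mul,
        Polynomial.eval_sub, Polynomial.eval_X, Polynomial.eval_C]
        using (hasMajorant_sub hq a).mul ih
  rw [(IsAlgClosed.splits P).eq_prod_roots]
  simpa only [Polynomial.eval_mul, Polynomial.eval_C] using
    (hasMajorant_const q P.leadingCoeff).mul (hroots P.roots)

/-- The Poisson kernel of the unit disc at `z`, as a density in the angle `ψ` of the boundary point
with total mass one over a period. -/
noncomputable def discPoisson (z : ℂ) (ψ : ℝ) : ℝ :=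
  (2 * π)⁻¹ * poissonKernel 0 z (circleMap 0 1 ψ)

lemma discPoisson_eq (z : ℂ) (ψ : ℝ) :
    discPoisson z ψ = (2 * π)⁻¹ * ((1 - ‖z‖ ^ 2) / ‖circleMap 0 1 ψ - z‖ ^ 2) := by
  simp [discPoisson, poissonKernel_def]

lemma periodic_discPoisson (z : ℂ) : Function.Periodic (discPoisson z) (2 * π) := fun ψ => by
  rw [discPoisson, periodic_circleMap, discPoisson]

lemma discPoisson_nonneg {z : ℂ} (hz : ‖z‖ < 1) (ψ : ℝ) : 0 ≤ discPoisson z ψ := by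
  have : 0 ≤ 1 - ‖z‖ ^ 2 := sub_nonneg.2 (pow_le_one₀ (norm_nonneg _) hz.le)
  rw [discPoisson_eq]
  positivity

lemma continuous_discPoisson {z : ℂ} (hz : ‖z‖ < 1) : Continuous (discPoisson z) := by
  simp only [funext (discPoisson_eq z)]
  refine continuous_const.mul (continuous_const.div (by fun_prop) fun ψ => ?_)
  exact pow_ne_zero 2 (norm_ne_zero_iff.2 (sub_ne_zero.2 fun h => by simp [← h] at hz))

lemma intervalIntegral_discPoisson_smul {G : ℂ → ℂ} (hG : DiffContOnCl ℂ G (ball 0 1)) {z : ℂ}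
    (hz : ‖z‖ < 1) : ∫ ψ in (0 : ℝ)..2 * π, discPoisson z ψ • G (circleMap 0 1 ψ) = G z := by
  rw [← hG.circleAverage_poissonKernel_smul (w := z) (by simpa using hz), Real.circleAverage_def,
    ← intervalIntegral.integral_smul]
  simp only [discPoisson, Pi.smul_apply', mul_smul]

lemma HasMajorant.rpow_norm_le_intervalIntegral {q : ℝ} {h : ℂ → ℂ} (hh : HasMajorant q h) {z : ℂ}
    (hz : ‖z‖ < 1) :
    ‖h z‖ ^ q ≤ ∫ ψ in (0 : ℝ)..2 * π, discPoisson z ψ * ‖h (circleMap 0 1 ψ)‖ ^ q := by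
  obtain ⟨G, hG, hG_le, hG_eq⟩ := hh
  have hboundary (ψ : ℝ) :
      ‖discPoisson z ψ • G (circleMap 0 1 ψ)‖ = discPoisson z ψ * ‖h (circleMap 0 1 ψ)‖ ^ q := by
    rw [norm_smul, hG_eq _ (by simp), Real.norm_of_nonneg (discPoisson_nonneg hz ψ)]
  calc
    ‖h z‖ ^ q ≤ ‖G z‖ := hG_le z hz
    _ = ‖∫ ψ in (0 : ℝ)..2 * π, discPoisson z ψ • G (circleMap 0 1 ψ)‖ := by
      rw [intervalIntegral_discPoisson_smul hG hz]
    _ ≤ ∫ ψ in (0 : ℝ)..2 * π, ‖discPoisson z ψ • G (circleMap 0 1 ψ)‖ :=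
      intervalIntegral.norm_integral_le_integral_norm (by positivity)
    _ = _ := by simp only [hboundary]

lemma exists_tendstoUniformlyOn_eval_of_differentiableOn {R r : ℝ} (hr : 0 < r) (hrR : r < R)
    {f : ℂ → ℂ} (hf : DifferentiableOn ℂ f (ball 0 R)) :
    ∃ P : ℕ → ℂ[X], TendstoUniformlyOn (fun n z => (P n).eval z) f atTop (ball 0 r) := by
  obtain ⟨s, hrs, hsR⟩ := exists_between hrR
  lift r to NNReal using hr.le
  lift s to NNReal using hr.le.trans hrs.le
  have hps := (hf.mono (closedBall_subset_ball hsR)).hasFPowerSeriesOnBall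
    (by exact_mod_cast hr.trans hrs)
  set a := cauchyPowerSeries f 0 s
  refine ⟨fun n => ∑ k ∈ Finset.range n, Polynomial.C (a.coeff k) * Polynomial.X ^ k, ?_⟩
  convert hps.tendstoUniformlyOn (r' := r) (by exact_mod_cast hrs) using 3 with n z
  · simp only [FormalMultilinearSeries.partialSum, Polynomial.eval_finsetSum, Polynomial.eval_mul,
      Polynomial.eval_C, Polynomial.eval_pow, Polynomial.eval_X,
      FormalMultilinearSeries.apply_eq_pow_smul_coeff, smul_eq_mul, mul_comm]
  · rw [zero_add]

lemma exists_tendsto_toContinuousMapOn_of_differentiableOn {R r : ℝ} (hr : 0 ≤ r) (hrR : r < R)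
    {f : ℂ → ℂ} (hf : DifferentiableOn ℂ f (ball 0 R)) :
    ∃ P : ℕ → ℂ[X], Tendsto (fun n => (P n).toContinuousMapOn (closedBall 0 r)) atTop
      (𝓝 ⟨(closedBall 0 r).domRestrict f,
        (hf.continuousOn.mono (closedBall_subset_ball hrR)).domRestrict⟩) := by
  obtain ⟨s, hrs, hsR⟩ := exists_between hrR
  obtain ⟨P, hP⟩ := exists_tendstoUniformlyOn_eval_of_differentiableOn (hr.trans_lt hrs) hsR hf
  refine ⟨P, ContinuousMap.tendsto_iff_tendstoUniformly.2 ?_⟩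
  exact tendstoUniformlyOn_iff_tendstoUniformly_comp_coe.1 (hP.mono (closedBall_subset_ball hrs))

lemma rpow_norm_le_intervalIntegral_discPoisson {q : ℝ} (hq : 0 < q) {R : ℝ} (hR : 1 < R)
    {f : ℂ → ℂ} (hf : DifferentiableOn ℂ f (ball 0 R)) {z : ℂ} (hz : ‖z‖ < 1) :
    ‖f z‖ ^ q ≤ ∫ ψ in (0 : ℝ)..2 * π, discPoisson z ψ * ‖f (circleMap 0 1 ψ)‖ ^ q := by
  have hcircle (ψ : ℝ) : circleMap 0 1 ψ ∈ closedBall (0 : ℂ) 1 :=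
    circleMap_mem_closedBall 0 zero_le_one ψ
  have hlhs : Continuous fun g : C(closedBall (0 : ℂ) 1, ℂ) =>
      ‖g ⟨z, mem_closedBall_zero_iff.2 hz.le⟩‖ ^ q :=
    (by fun_prop : Continuous _).rpow_const fun _ => Or.inr hq.le
  have hrhs : Continuous fun g : C(closedBall (0 : ℂ) 1, ℂ) =>
      ∫ ψ in (0 : ℝ)..2 * π, discPoisson z ψ * ‖g ⟨circleMap 0 1 ψ, hcircle ψ⟩‖ ^ q := by
    refine intervalIntegral.continuous_parametric_intervalIntegral_of_continuous' ?_ 0 (2 * π)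
    refine ((continuous_discPoisson hz).comp continuous_snd).mul
      (Continuous.rpow_const ?_ fun _ => Or.inr hq.le)
    fun_prop
  obtain ⟨P, hP⟩ := exists_tendsto_toContinuousMapOn_of_differentiableOn zero_le_one hR hf
  exact le_of_tendsto_of_tendsto' ((hlhs.tendsto _).comp hP) ((hrhs.tendsto _).comp hP)
    fun n => (hasMajorant_eval hq (P n)).rpow_norm_le_intervalIntegral hz

lemma setLIntegral_Ioc_ofReal_of_periodic {F : ℝ → ℝ} {T : ℝ} (hF : Continuous F)
    (hF0 : ∀ x, 0 ≤ F x) (hT : 0 ≤ T) (hper : Function.Periodic F T) (a b : ℝ) :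
    ∫⁻ x in Ioc a (a + T), ENNReal.ofReal (F x) = ENNReal.ofReal (∫ x in b..b + T, F x) := by
  rw [← hper.intervalIntegral_add_eq a b, intervalIntegral.integral_of_le (by linarith),
    ofReal_integral_eq_lintegral_ofReal (hF.integrableOn_Icc.mono_set Ioc_subset_Icc_self)
      (Eventually.of_forall hF0)]

lemma ofReal_rpow_norm_le_setLIntegral_Ioc_discPoisson {q : ℝ} (hq : 0 < q) {R : ℝ} (hR : 1 < R)
    {f : ℂ → ℂ} (hf : DifferentiableOn ℂ f (ball 0 R)) {z : ℂ} (hz : ‖z‖ < 1) (a : ℝ) :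
    ENNReal.ofReal (‖f z‖ ^ q) ≤ ∫⁻ ψ in Ioc a (a + 2 * π),
      ENNReal.ofReal (discPoisson z ψ) * ENNReal.ofReal (‖f (circleMap 0 1 ψ)‖ ^ q) := by
  have hfc : Continuous fun ψ => f (circleMap 0 1 ψ) :=
    continuous_comp_circleMap hf.continuousOn zero_le_one hR
  have hFc : Continuous fun ψ => discPoisson z ψ * ‖f (circleMap 0 1 ψ)‖ ^ q :=
    (continuous_discPoisson hz).mul (hfc.norm.rpow_const fun _ => Or.inr hq.le)
  have hper : Function.Periodic (fun ψ => discPoisson z ψ * ‖f (circleMap 0 1 ψ)‖ ^ q) (2 * π) :=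
    fun ψ => by simp only [periodic_discPoisson z ψ, periodic_circleMap 0 1 ψ]
  simp only [← ENNReal.ofReal_mul (discPoisson_nonneg hz _)]
  rw [setLIntegral_Ioc_ofReal_of_periodic hFc
    (fun ψ => mul_nonneg (discPoisson_nonneg hz ψ) (by positivity)) (by positivity) hper a 0,
    zero_add]
  exact ENNReal.ofReal_le_ofReal (rpow_norm_le_intervalIntegral_discPoisson hq hR hf hz)

end PoissonMajorant

section PoissonKernelBound

open Metric Complex
open scoped Real

lemma norm_circleMap_zero_one_sub_circleMap (x y : ℝ) :
    ‖circleMap 0 1 x - circleMap 0 1 y‖ = 2 * |Real.sin ((x - y) / 2)| := by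
  have hfactor : circleMap 0 1 x - circleMap 0 1 y =
      circleMap 0 1 y * (exp (I * ((x - y : ℝ) : ℂ)) - 1) := by
    simp only [circleMap_zero, ofReal_one, one_mul, mul_sub, ← exp_add, mul_one]
    congr 2
    push_cast
    ring
  rw [hfactor, norm_mul, norm_circleMap_zero, abs_one, one_mul, norm_exp_I_mul_ofReal_sub_one,
    Real.norm_eq_abs, abs_mul, abs_two]

lemma two_div_pi_mul_abs_sub_le_norm_circleMap_sub {x y : ℝ} (h : |x - y| ≤ π) :
    2 / π * |x - y| ≤ ‖circleMap 0 1 x - circleMap 0 1 y‖ := by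
  have hsin := Real.mul_abs_le_abs_sin (x := (x - y) / 2) (by rw [abs_div, abs_two]; linarith)
  rw [abs_div, abs_two] at hsin
  rw [norm_circleMap_zero_one_sub_circleMap]
  linarith

lemma norm_circleMap_arg_sub_self {z : ℂ} (hz : ‖z‖ ≤ 1) :
    ‖circleMap 0 1 (arg z) - z‖ = 1 - ‖z‖ := by
  have hfactor : circleMap 0 1 (arg z) - z = ((1 - ‖z‖ : ℝ) : ℂ) * circleMap 0 1 (arg z) := by
    have hpolar : circleMap 0 ‖z‖ (arg z) = z := by rw [circleMap_zero, norm_mul_exp_arg_mul_I]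
    nth_rw 2 [← hpolar]
    simp only [circleMap_zero]
    push_cast
    ring
  rw [hfactor, norm_mul, norm_real, Real.norm_of_nonneg (sub_nonneg.2 hz), norm_circleMap_zero,
    abs_one, mul_one]

lemma norm_circleMap_sub_le_of_abs_sub_arg_lt {z : ℂ} {θ : ℝ} (hz : ‖z‖ ≤ 1)
    (hθ : |θ - arg z| < 1 / 2 * (1 - ‖z‖)) : ‖circleMap 0 1 θ - z‖ ≤ 3 / 2 * (1 - ‖z‖) := by
  have harc : ‖circleMap 0 1 θ - circleMap 0 1 (arg z)‖ ≤ |θ - arg z| := by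
    simpa [dist_eq_norm] using (lipschitzWith_circleMap 0 1).dist_le_mul θ (arg z)
  have htri := norm_sub_le_norm_sub_add_norm_sub (circleMap 0 1 θ) (circleMap 0 1 (arg z)) z
  rw [norm_circleMap_arg_sub_self hz] at htri
  linarith

lemma max_one_sub_norm_abs_sub_le {z : ℂ} {θ ψ : ℝ} (hz : ‖z‖ ≤ 1)
    (hθ : |θ - arg z| < 1 / 2 * (1 - ‖z‖)) (hψ : |ψ - θ| ≤ π) :
    max (1 - ‖z‖) |ψ - θ| ≤ 4 * ‖circleMap 0 1 ψ - z‖ := by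
  have hradial : 1 - ‖z‖ ≤ ‖circleMap 0 1 ψ - z‖ := by
    simpa using norm_sub_norm_le (circleMap 0 1 ψ) z
  have hangular : 2 / π * |ψ - θ| ≤ 5 / 2 * ‖circleMap 0 1 ψ - z‖ := by
    have htri := norm_sub_le_norm_sub_add_norm_sub (circleMap 0 1 ψ) z (circleMap 0 1 θ)
    rw [norm_sub_rev z] at htri
    linarith [two_div_pi_mul_abs_sub_le_norm_circleMap_sub hψ,
      norm_circleMap_sub_le_of_abs_sub_arg_lt hz hθ]
  rw [div_mul_eq_mul_div, div_le_iff₀ Real.pi_pos] at hangular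
  refine max_le ?_ ?_ <;> nlinarith [Real.pi_lt_d2, norm_nonneg (circleMap 0 1 ψ - z)]

lemma discPoisson_le {z : ℂ} {θ ψ : ℝ} (hz : ‖z‖ < 1) (hθ : |θ - arg z| < 1 / 2 * (1 - ‖z‖))
    (hψ : |ψ - θ| ≤ π) :
    discPoisson z ψ ≤ 32 * ((1 - ‖z‖) / max (1 - ‖z‖) |ψ - θ| ^ 2) := by
  have ht : 0 < 1 - ‖z‖ := sub_pos.2 hz
  set M := max (1 - ‖z‖) |ψ - θ|
  have : 0 < M := lt_max_of_lt_left ht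
  have hMD : M ≤ 4 * ‖circleMap 0 1 ψ - z‖ := max_one_sub_norm_abs_sub_le hz.le hθ hψ
  have hpi : (2 * π)⁻¹ ≤ 1 := inv_le_one_of_one_le₀ (by linarith [Real.pi_gt_three])
  have hnum : 0 ≤ 1 - ‖z‖ ^ 2 := sub_nonneg.2 (pow_le_one₀ (norm_nonneg _) hz.le)
  rw [discPoisson_eq]
  calc
    (2 * π)⁻¹ * ((1 - ‖z‖ ^ 2) / ‖circleMap 0 1 ψ - z‖ ^ 2)
      ≤ 1 * (2 * (1 - ‖z‖) / (M / 4) ^ 2) := by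
        gcongr
        · nlinarith [norm_nonneg z]
        · linarith
    _ = 32 * ((1 - ‖z‖) / M ^ 2) := by ring

end PoissonKernelBound

section KernelIntegral

variable {α : Type*} [MeasurableSpace α] {μ : Measure α} {t : ℝ} {d : α → ℝ} {h : α → ENNReal}
  {m : ENNReal}

/- The kernel `t / max t d ^ 2` is a superposition of indicators of sublevel sets of `d`. -/
lemma ofReal_div_max_sq_eq_lintegral (ht : 0 < t) (y : ℝ) :
    ENNReal.ofReal (t / max t y ^ 2) = ENNReal.ofReal (2 * t) *
      ∫⁻ s in Ioi t, (Ioi y).indicator (fun s => ENNReal.ofReal (s ^ (-2 - 1 : ℝ))) s := by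
  have hM : 0 < max t y := lt_max_of_lt_left ht
  rw [setLIntegral_indicator measurableSet_Ioi, Ioi_inter_Ioi, max_comm y t,
    lintegral_Ioi_rpow two_pos hM, ← ENNReal.ofReal_mul (by positivity), Real.rpow_neg hM.le,
    Real.rpow_two]
  congr 1
  ring

lemma measurable_indicator_Ioi_comp (hd : Measurable d) {k : ℝ → ENNReal} (hk : Measurable k) :
    Measurable fun x : α × ℝ => (Ioi (d x.1)).indicator k x.2 :=
  Measurable.indicator (s := {x : α × ℝ | d x.1 < x.2}) (hk.comp measurable_snd)
    (measurableSet_lt (hd.comp measurable_fst) measurable_snd)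

lemma lintegral_div_max_sq_mul_le [SFinite μ] (ht : 0 < t) (hd : Measurable d) (hh : Measurable h)
    (hm : ∀ s, t < s → ∫⁻ x in {x | d x < s}, h x ∂μ ≤ ENNReal.ofReal s * m) :
    ∫⁻ x, ENNReal.ofReal (t / max t (d x) ^ 2) * h x ∂μ ≤ 2 * m := by
  set k : ℝ → ENNReal := fun s => ENNReal.ofReal (s ^ (-2 - 1 : ℝ))
  have hk : Measurable k := by fun_prop
  have hslice (s : ℝ) : ∫⁻ x, (Ioi (d x)).indicator k s * h x ∂μ =
      k s * ∫⁻ x in {x | d x < s}, h x ∂μ := by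
    rw [← lintegral_indicator (measurableSet_lt hd measurable_const),
      ← lintegral_const_mul' _ _ ENNReal.ofReal_ne_top]
    refine lintegral_congr fun x => ?_
    by_cases hx : d x < s <;> simp [indicator, hx, k]
  have hscale (s : ℝ) (hs : 0 < s) :
      k s * ENNReal.ofReal s = ENNReal.ofReal (s ^ (-1 - 1 : ℝ)) := by
    rw [← ENNReal.ofReal_mul (by positivity), ← Real.rpow_add_one hs.ne']
    norm_num
  calc
    ∫⁻ x, ENNReal.ofReal (t / max t (d x) ^ 2) * h x ∂μ
      = ENNReal.ofReal (2 * t) * ∫⁻ x, (∫⁻ s in Ioi t, (Ioi (d x)).indicator k s * h x) ∂μ := by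
        rw [← lintegral_const_mul' _ _ ENNReal.ofReal_ne_top]
        refine lintegral_congr fun x => ?_
        rw [lintegral_mul_const _ (hk.indicator measurableSet_Ioi), ← mul_assoc,
          ← ofReal_div_max_sq_eq_lintegral ht]
    _ = ENNReal.ofReal (2 * t) * ∫⁻ s in Ioi t, k s * ∫⁻ x in {x | d x < s}, h x ∂μ := by
        rw [lintegral_lintegral_swap ((measurable_indicator_Ioi_comp hd hk).mul
          (hh.comp measurable_fst)).aemeasurable]
        simp only [hslice]
    _ ≤ ENNReal.ofReal (2 * t) * ∫⁻ s in Ioi t, ENNReal.ofReal (s ^ (-1 - 1 : ℝ)) * m := by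
        refine mul_le_mul_right (setLIntegral_mono' measurableSet_Ioi fun s hs => ?_) _
        rw [← hscale s (ht.trans hs), mul_assoc]
        exact mul_le_mul_right (hm s hs) _
    _ = 2 * m := by
        rw [lintegral_mul_const _ (by fun_prop), lintegral_Ioi_rpow one_pos ht, ← mul_assoc,
          ← ENNReal.ofReal_mul (by positivity), Real.rpow_neg_one, div_one, mul_assoc,
          mul_inv_cancel₀ ht.ne', mul_one, ENNReal.ofReal_ofNat]

end KernelIntegral

section MaximalFunction

open Metric
open scoped Real

lemma mul_measure_le_of_forall_le_setLAverage {α : Type*} [PseudoMetricSpace α]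
    [TopologicalSpace.SeparableSpace α] [MeasurableSpace α] [OpensMeasurableSpace α]
    {μ : Measure α} {K m : ENNReal} {R : ℝ} {B U : Set α} {h : α → ENNReal}
    (hK : ∀ x r, μ (closedBall x (4 * r)) ≤ K * μ (closedBall x r))
    (hB : ∀ x ∈ B, ∃ r ∈ Ioc 0 R, closedBall x r ⊆ U ∧ m ≤ ⨍⁻ y in closedBall x r, h y ∂μ) :
    m * μ B ≤ K * ∫⁻ y in U, h y ∂μ := by
  choose! r hr hrU hrm using hB
  obtain ⟨u, huB, hdisj, hcov⟩ := Vitali.exists_disjoint_subfamily_covering_enlargement_closedBall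
    B (fun x => x) r R (fun x hx => (hr x hx).2) 4 (by norm_num)
  have hu : u.Countable := hdisj.countable_of_nonempty_interior fun x hx =>
    ⟨x, ball_subset_interior_closedBall (mem_ball_self (hr x (huB hx)).1)⟩
  have hBsub : B ⊆ ⋃ x ∈ u, closedBall x (4 * r x) := fun x hx => by
    obtain ⟨y, hy, hxy⟩ := hcov x hx
    exact mem_biUnion hy (hxy (mem_closedBall_self (hr x hx).1.le))
  have hball (x : u) : m * μ (closedBall (x : α) (4 * r x)) ≤
      K * ∫⁻ y in closedBall (x : α) (r x), h y ∂μ := by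
    have havg : m * μ (closedBall (x : α) (r x)) ≤ ∫⁻ y in closedBall (x : α) (r x), h y ∂μ :=
      ENNReal.mul_le_of_le_div ((setLAverage_eq μ h _).symm ▸ hrm x (huB x.2))
    calc
      _ ≤ m * (K * μ (closedBall (x : α) (r x))) := mul_le_mul_right (hK _ _) _
      _ = K * (m * μ (closedBall (x : α) (r x))) := mul_left_comm _ _ _
      _ ≤ _ := mul_le_mul_right havg _
  calc
    m * μ B ≤ m * ∑' x : u, μ (closedBall (x : α) (4 * r x)) :=
      mul_le_mul_right ((measure_mono hBsub).trans (measure_biUnion_le μ hu _)) _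
    _ ≤ ∑' x : u, K * ∫⁻ y in closedBall (x : α) (r x), h y ∂μ := by
      rw [← ENNReal.tsum_mul_left]
      exact ENNReal.tsum_le_tsum hball
    _ = K * ∫⁻ y in ⋃ x ∈ u, closedBall x (r x), h y ∂μ := by
      rw [ENNReal.tsum_mul_left, lintegral_biUnion hu (fun _ _ => measurableSet_closedBall) hdisj]
    _ ≤ K * ∫⁻ y in U, h y ∂μ :=
      mul_le_mul_right (lintegral_mono_set (iUnion₂_subset fun x hx => hrU x (huB hx))) _

/-- The centred Hardy–Littlewood maximal function on the circle, of a function of the angle: the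
intervals have length at most one period. -/
noncomputable def circleMaximal (h : ℝ → ENNReal) (θ : ℝ) : ENNReal :=
  ⨆ s ∈ Ioc 0 π, ⨍⁻ ψ in closedBall θ s, h ψ ∂volume

lemma setLIntegral_closedBall_le_circleMaximal (h : ℝ → ENNReal) (θ : ℝ) {s : ℝ}
    (hs : s ∈ Ioc 0 π) :
    ∫⁻ ψ in closedBall θ s, h ψ ≤ ENNReal.ofReal (2 * s) * circleMaximal h θ := by
  rw [← measure_mul_setLAverage h measure_closedBall_lt_top.ne, Real.volume_closedBall]
  exact mul_le_mul_right (le_iSup₂ (f := fun s _ => ⨍⁻ ψ in closedBall θ s, h ψ ∂volume) s hs) _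

lemma circleMaximal_le_add {g h : ℝ → ENNReal} {c : ENNReal} (hgh : ∀ ψ, g ψ ≤ c + h ψ) (θ : ℝ) :
    circleMaximal g θ ≤ c + circleMaximal h θ := by
  refine iSup₂_le fun s hs => ?_
  have hvol : volume (closedBall θ s) ≠ 0 := (measure_closedBall_pos volume θ hs.1).ne'
  calc
    ⨍⁻ ψ in closedBall θ s, g ψ ∂volume ≤ ⨍⁻ ψ in closedBall θ s, (c + h ψ) ∂volume :=
      lintegral_mono fun ψ => hgh ψ
    _ = c + ⨍⁻ ψ in closedBall θ s, h ψ ∂volume := by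
      conv_rhs => rw [← setLAverage_const hvol measure_closedBall_lt_top.ne c]
      exact lintegral_add_left measurable_const _
    _ ≤ c + circleMaximal h θ := by
      gcongr
      exact le_iSup₂ (f := fun s _ => ⨍⁻ ψ in closedBall θ s, h ψ ∂volume) s hs

lemma setLIntegral_Ioc_neg_two_pi_two_pi {h : ℝ → ENNReal}
    (hper : Function.Periodic h (2 * π)) :
    ∫⁻ ψ in Ioc (-(2 * π)) (2 * π), h ψ = 2 * ∫⁻ ψ in Ioo (-π) π, h ψ := by
  have hperiod (a : ℝ) : ∫⁻ ψ in Ioc a (a + 2 * π), h ψ = ∫⁻ ψ in Ioo (-π) π, h ψ := by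
    have hshift := (isAddFundamentalDomain_Ioc Real.two_pi_pos a volume).setLIntegral_eq
      (isAddFundamentalDomain_Ioc Real.two_pi_pos (-π) volume) h hper.map_vadd_zmultiples
    rw [hshift, show -π + 2 * π = π by ring, setLIntegral_congr Ioo_ae_eq_Ioc]
  rw [← Ioc_union_Ioc_eq_Ioc (b := 0) (by linarith [Real.pi_pos]) (by linarith [Real.pi_pos]),
    lintegral_union measurableSet_Ioc (Ioc_disjoint_Ioc_of_le le_rfl)]
  have hneg := hperiod (-(2 * π))
  have hpos := hperiod 0
  rw [neg_add_cancel] at hneg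
  rw [zero_add] at hpos
  rw [hneg, hpos, two_mul]

lemma mul_volume_lt_circleMaximal_le {h : ℝ → ENNReal} (hper : Function.Periodic h (2 * π))
    (m : ENNReal) :
    m * volume {θ ∈ Ioo (-π) π | m < circleMaximal h θ} ≤ 8 * ∫⁻ ψ in Ioo (-π) π, h ψ := by
  have hdouble (x r : ℝ) : volume (closedBall x (4 * r)) ≤ 4 * volume (closedBall x r) := by
    rw [Real.volume_closedBall, Real.volume_closedBall, mul_left_comm,
      ENNReal.ofReal_mul (by norm_num), ENNReal.ofReal_ofNat]
  have hweak := mul_measure_le_of_forall_le_setLAverage (R := π) (U := Ioc (-(2 * π)) (2 * π))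
    (B := {θ ∈ Ioo (-π) π | m < circleMaximal h θ}) (h := h) hdouble <| by
      rintro θ ⟨hθ, hm⟩
      obtain ⟨s, hs, hms⟩ : ∃ s, ∃ _ : s ∈ Ioc 0 π, m < ⨍⁻ ψ in closedBall θ s, h ψ ∂volume := by
        simpa only [circleMaximal, lt_iSup_iff] using hm
      refine ⟨s, hs, ?_, hms.le⟩
      rw [Real.closedBall_eq_Icc]
      exact fun ψ hψ => ⟨by linarith [hθ.1, hs.2, hψ.1], by linarith [hθ.2, hs.2, hψ.2]⟩
  rw [setLIntegral_Ioc_neg_two_pi_two_pi hper, ← mul_assoc] at hweak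
  norm_num at hweak
  exact hweak

lemma lintegral_discPoisson_mul_le_circleMaximal {h : ℝ → ENNReal} (hh : Measurable h) {z : ℂ}
    {θ : ℝ} (hz : ‖z‖ < 1) (hθ : |θ - Complex.arg z| < 1 / 2 * (1 - ‖z‖)) :
    ∫⁻ ψ in closedBall θ π, ENNReal.ofReal (discPoisson z ψ) * h ψ ≤
      128 * circleMaximal h θ := by
  have hint (s : ℝ) (hs : 1 - ‖z‖ < s) :
      ∫⁻ ψ in {ψ | |ψ - θ| < s}, h ψ ∂volume.restrict (closedBall θ π) ≤
        ENNReal.ofReal s * (2 * circleMaximal h θ) := by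
    have hr : min s π ∈ Ioc 0 π :=
      ⟨lt_min ((sub_pos.2 hz).trans hs) Real.pi_pos, min_le_right s π⟩
    have hsub : {ψ | |ψ - θ| < s} ∩ closedBall θ π ⊆ closedBall θ (min s π) :=
      fun ψ hψ => mem_closedBall.2 (le_min (le_of_lt hψ.1) hψ.2)
    rw [Measure.restrict_restrict (measurableSet_lt (by fun_prop) measurable_const), ← mul_assoc,
      mul_comm _ 2, ← ENNReal.ofReal_ofNat, ← ENNReal.ofReal_mul zero_le_two]
    refine (lintegral_mono_set hsub).trans
      ((setLIntegral_closedBall_le_circleMaximal h θ hr).trans ?_)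
    gcongr
    exact min_le_left s π
  calc
    ∫⁻ ψ in closedBall θ π, ENNReal.ofReal (discPoisson z ψ) * h ψ
      ≤ ∫⁻ ψ in closedBall θ π, ENNReal.ofReal 32 *
          (ENNReal.ofReal ((1 - ‖z‖) / max (1 - ‖z‖) |ψ - θ| ^ 2) * h ψ) := by
        refine setLIntegral_mono' measurableSet_closedBall fun ψ hψ => ?_
        rw [← mul_assoc, ← ENNReal.ofReal_mul (by norm_num)]
        gcongr
        exact discPoisson_le hz hθ hψ
    _ ≤ ENNReal.ofReal 32 * (2 * (2 * circleMaximal h θ)) := by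
        rw [lintegral_const_mul' _ _ ENNReal.ofReal_ne_top]
        gcongr
        exact lintegral_div_max_sq_mul_le (sub_pos.2 hz) (by fun_prop) hh hint
    _ = 128 * circleMaximal h θ := by
        rw [ENNReal.ofReal_ofNat, ← mul_assoc, ← mul_assoc]
        norm_num

end MaximalFunction

section UpperBound

open Metric Complex
open scoped Real

lemma lintegral_sq_le_of_mul_measure_lt_le {α β : Type*} [MeasurableSpace α] [MeasurableSpace β]
    {μ : Measure α} {ν : Measure β} [SFinite ν] {N : α → ℝ} {g : β → ℝ} {A : ENNReal} (hA : A ≠ ⊤)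
    (hN : AEMeasurable N μ) (hN0 : ∀ x, 0 ≤ N x) (hg : Measurable g) (hg0 : ∀ y, 0 ≤ g y)
    (h : ∀ t, 0 < t → ENNReal.ofReal t * μ {x | t < N x} ≤
      A * ∫⁻ y in {y | t < g y}, ENNReal.ofReal (g y) ∂ν) :
    ∫⁻ x, ENNReal.ofReal (N x ^ 2) ∂μ ≤ 2 * A * ∫⁻ y, ENNReal.ofReal (g y ^ 2) ∂ν := by
  have hslice (y : β) : ∫⁻ t in Ioi 0, (Iio (g y)).indicator (fun _ => ENNReal.ofReal (g y)) t =
      ENNReal.ofReal (g y ^ 2) := by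
    rw [setLIntegral_indicator measurableSet_Iio, setLIntegral_const, Iio_inter_Ioi,
      Real.volume_Ioo, sub_zero, ← ENNReal.ofReal_mul (hg0 y), sq]
  have hmeas : Measurable fun x : ℝ × β =>
      (Iio (g x.2)).indicator (fun _ => ENNReal.ofReal (g x.2)) x.1 :=
    Measurable.indicator (s := {x : ℝ × β | x.1 < g x.2}) (by fun_prop)
      (measurableSet_lt measurable_fst (hg.comp measurable_snd))
  calc
    ∫⁻ x, ENNReal.ofReal (N x ^ 2) ∂μ = 2 * ∫⁻ t in Ioi 0, ENNReal.ofReal t * μ {x | t < N x} := by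
      have hlayer := lintegral_rpow_eq_lintegral_meas_lt_mul μ
        (Filter.Eventually.of_forall hN0) hN two_pos
      norm_num at hlayer
      simpa only [mul_comm] using hlayer
    _ ≤ 2 * ∫⁻ t in Ioi 0, A * ∫⁻ y in {y | t < g y}, ENNReal.ofReal (g y) ∂ν :=
      mul_le_mul_right (setLIntegral_mono' measurableSet_Ioi fun t ht => h t ht) _
    _ = 2 * A * ∫⁻ t in Ioi 0, ∫⁻ y,
        (Iio (g y)).indicator (fun _ => ENNReal.ofReal (g y)) t ∂ν := by
      rw [lintegral_const_mul' _ _ hA, mul_assoc]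
      simp only [← lintegral_indicator (measurableSet_lt measurable_const hg)]
      rfl
    _ = 2 * A * ∫⁻ y, ENNReal.ofReal (g y ^ 2) ∂ν := by
      rw [lintegral_lintegral_swap hmeas.aemeasurable]
      simp only [hslice]

/- The part of `g` below height `t` contributes at most `t` to the maximal function. -/
lemma ofReal_mul_volume_lt_circleMaximal_le {g : ℝ → ℝ} (hper : Function.Periodic g (2 * π))
    (hg : Measurable g) {t : ℝ} (ht : 0 ≤ t) :
    ENNReal.ofReal t * volume {θ ∈ Ioo (-π) π |
      ENNReal.ofReal (2 * t) < circleMaximal (fun ψ => ENNReal.ofReal (g ψ)) θ} ≤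
      8 * ∫⁻ ψ in {ψ | t < g ψ}, ENNReal.ofReal (g ψ) ∂volume.restrict (Ioo (-π) π) := by
  set h : ℝ → ENNReal := {ψ | t < g ψ}.indicator fun ψ => ENNReal.ofReal (g ψ) with hdef
  have hh : Function.Periodic h (2 * π) := fun ψ => by
    simp only [hdef, indicator, mem_ofPred_eq, hper ψ]
  have hle (ψ : ℝ) : ENNReal.ofReal (g ψ) ≤ ENNReal.ofReal t + h ψ := by
    rcases lt_or_ge t (g ψ) with hψ | hψ
    · simp only [hdef, indicator, mem_ofPred_eq, hψ, if_true, le_add_self]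
    · exact (ENNReal.ofReal_le_ofReal hψ).trans le_self_add
  rw [← lintegral_indicator (measurableSet_lt measurable_const hg)]
  refine le_trans ?_ (mul_volume_lt_circleMaximal_le hh (ENNReal.ofReal t))
  gcongr ENNReal.ofReal t * volume ?_
  rintro θ ⟨hθ, hlt⟩
  refine ⟨hθ, lt_of_add_lt_add_left (a := ENNReal.ofReal t) ?_⟩
  rw [← ENNReal.ofReal_add ht ht, ← two_mul]
  exact hlt.trans_le (circleMaximal_le_add hle θ)

lemma lintegral_sq_le_of_le_circleMaximal {g N : ℝ → ℝ} (hper : Function.Periodic g (2 * π))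
    (hg : Measurable g) (hg0 : ∀ ψ, 0 ≤ g ψ)
    (hN : AEMeasurable N (volume.restrict (Ioo (-π) π))) (hN0 : ∀ θ, 0 ≤ N θ)
    (hle : ∀ θ ∈ Ioo (-π) π,
      ENNReal.ofReal (N θ) ≤ circleMaximal (fun ψ => ENNReal.ofReal (g ψ)) θ) :
    ∫⁻ θ in Ioo (-π) π, ENNReal.ofReal (N θ ^ 2) ≤
      64 * ∫⁻ ψ in Ioo (-π) π, ENNReal.ofReal (g ψ ^ 2) := by
  have hhalf : ∫⁻ θ in Ioo (-π) π, ENNReal.ofReal ((N θ / 2) ^ 2) ≤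
      2 * 8 * ∫⁻ ψ in Ioo (-π) π, ENNReal.ofReal (g ψ ^ 2) := by
    refine lintegral_sq_le_of_mul_measure_lt_le (by norm_num) (hN.div_const 2)
      (fun θ => div_nonneg (hN0 θ) zero_le_two) hg hg0 fun t ht => ?_
    refine le_trans ?_ (ofReal_mul_volume_lt_circleMaximal_le hper hg ht.le)
    rw [Measure.restrict_apply₀' measurableSet_Ioo.nullMeasurableSet]
    gcongr ENNReal.ofReal t * volume ?_
    rintro θ ⟨hlt, hθ⟩
    rw [mem_ofPred_eq, lt_div_iff₀ two_pos, mul_comm] at hlt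
    refine ⟨hθ, lt_of_lt_of_le ?_ (hle θ hθ)⟩
    exact (ENNReal.ofReal_lt_ofReal_iff ((mul_pos two_pos ht).trans hlt)).2 hlt
  have hscale (θ : ℝ) : ENNReal.ofReal (N θ ^ 2) = 4 * ENNReal.ofReal ((N θ / 2) ^ 2) := by
    rw [← ENNReal.ofReal_ofNat, ← ENNReal.ofReal_mul (by norm_num)]
    congr 1
    ring
  simp only [hscale]
  rw [lintegral_const_mul' _ _ (by norm_num)]
  refine (mul_le_mul_right hhalf 4).trans_eq ?_
  rw [← mul_assoc]
  norm_num

section Cone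

variable {R q θ : ℝ} {f : ℂ → ℂ}

lemma ofReal_rpow_norm_le_circleMaximal (hq : 0 < q) (hR : 1 < R)
    (hf : DifferentiableOn ℂ f (ball 0 R)) {z : ℂ} (hz : ‖z‖ < 1)
    (hθ : |θ - arg z| < 1 / 2 * (1 - ‖z‖)) :
    ENNReal.ofReal (‖f z‖ ^ q) ≤
      128 * circleMaximal (fun ψ => ENNReal.ofReal (‖f (circleMap 0 1 ψ)‖ ^ q)) θ := by
  have hfc : Continuous fun ψ => f (circleMap 0 1 ψ) :=
    continuous_comp_circleMap hf.continuousOn zero_le_one hR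
  refine (ofReal_rpow_norm_le_setLIntegral_Ioc_discPoisson hq hR hf hz (θ - π)).trans ?_
  refine (lintegral_mono_set fun ψ hψ => ?_).trans
    (lintegral_discPoisson_mul_le_circleMaximal
      (hfc.measurable.norm.pow_const q).ennreal_ofReal hz hθ)
  rw [Real.closedBall_eq_Icc]
  exact ⟨hψ.1.le, by linarith [hψ.2]⟩

lemma ofReal_ntang_re_rpow_le_circleMaximal (hq : 0 < q) (hR : 1 < R)
    (hf : DifferentiableOn ℂ f (ball 0 R)) (hθ : θ ∈ Ioo (-π) π) :
    ENNReal.ofReal (Ntang (fun z => (f z).re) (circleMap 0 1 θ) ^ q) ≤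
      128 * circleMaximal (fun ψ => ENNReal.ofReal (‖f (circleMap 0 1 ψ)‖ ^ q)) θ := by
  set X := 128 * circleMaximal (fun ψ => ENNReal.ofReal (‖f (circleMap 0 1 ψ)‖ ^ q)) θ
  rcases eq_or_ne X ⊤ with htop | htop
  · exact htop ▸ le_top
  have hbound : Ntang (fun z => (f z).re) (circleMap 0 1 θ) ≤ X.toReal ^ q⁻¹ := by
    refine Real.sSup_le ?_ (by positivity)
    rintro _ ⟨z, hz, rfl⟩
    have hcone : |θ - arg z| < 1 / 2 * (1 - ‖z‖) := by
      simpa only [arg_circleMap_zero one_pos hθ, norm_circleMap_zero, abs_one, div_one] using hz.2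
    have hfz : ‖f z‖ ^ q ≤ X.toReal := (ENNReal.ofReal_le_iff_le_toReal htop).1
      (ofReal_rpow_norm_le_circleMaximal hq hR hf hz.1 hcone)
    exact (abs_re_le_norm _).trans
      ((Real.le_rpow_inv_iff_of_pos (norm_nonneg _) ENNReal.toReal_nonneg hq).2 hfz)
  rw [ENNReal.ofReal_le_iff_le_toReal htop]
  exact (Real.le_rpow_inv_iff_of_pos (ntang_nonneg _ _) ENNReal.toReal_nonneg hq).1 hbound

end Cone

lemma exists_lintegral_ntang_re_rpow_le {p : ℝ} (hp : 0 < p) : ∃ C : ℝ, 0 < C ∧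
    ∀ R : ℝ, 1 < R → ∀ f : ℂ → ℂ, DifferentiableOn ℂ f (ball 0 R) →
      ∫⁻ θ in Ioo (-π) π, ENNReal.ofReal (Ntang (fun z => (f z).re) (circleMap 0 1 θ) ^ p) ≤
        ENNReal.ofReal C * ∫⁻ θ in Ioo (-π) π, ENNReal.ofReal (‖f (circleMap 0 1 θ)‖ ^ p) := by
  refine ⟨128 ^ 2 * 64, by positivity, fun R hR f hf => ?_⟩
  have hv : ContinuousOn (fun z => (f z).re) (ball 0 R) :=
    continuous_re.comp_continuousOn hf.continuousOn
  have hfc : Continuous fun ψ => f (circleMap 0 1 ψ) :=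
    continuous_comp_circleMap hf.continuousOn zero_le_one hR
  have hsq (x : ℝ) (hx : 0 ≤ x) : (x ^ (p / 2)) ^ 2 = x ^ p := by
    rw [← Real.rpow_natCast, ← Real.rpow_mul hx, Nat.cast_ofNat, div_mul_cancel₀ p two_ne_zero]
  have hmax := lintegral_sq_le_of_le_circleMaximal (g := fun ψ => ‖f (circleMap 0 1 ψ)‖ ^ (p / 2))
    (N := fun θ => Ntang (fun z => (f z).re) (circleMap 0 1 θ) ^ (p / 2) / 128)
    (fun ψ => by simp only [periodic_circleMap 0 1 ψ]) (hfc.measurable.norm.pow_const _)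
    (fun ψ => by positivity)
    (((aemeasurable_ntang_circleMap hv hR).pow_const _).div_const _)
    (fun θ => div_nonneg (Real.rpow_nonneg (ntang_nonneg _ _) _) (by norm_num)) fun θ hθ => by
      rw [ENNReal.ofReal_div_of_pos (by norm_num), ENNReal.ofReal_ofNat]
      exact ENNReal.div_le_of_le_mul'
        (ofReal_ntang_re_rpow_le_circleMaximal (half_pos hp) hR hf hθ)
  have hscale (θ : ℝ) : ENNReal.ofReal (Ntang (fun z => (f z).re) (circleMap 0 1 θ) ^ p) =
      ENNReal.ofReal (128 ^ 2) *
        ENNReal.ofReal ((Ntang (fun z => (f z).re) (circleMap 0 1 θ) ^ (p / 2) / 128) ^ 2) := by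
    rw [← ENNReal.ofReal_mul (by positivity), div_pow, hsq _ (ntang_nonneg _ _)]
    field_simp
  simp only [hsq _ (norm_nonneg _)] at hmax
  simp only [hscale]
  rw [lintegral_const_mul' _ _ ENNReal.ofReal_ne_top, ENNReal.ofReal_mul (by positivity), mul_assoc]
  exact mul_le_mul_right (hmax.trans_eq (by rw [ENNReal.ofReal_ofNat])) _

end UpperBound

section Polar

open Metric Complex
open scoped Real

lemma quasiMeasurePreserving_polarCoord_symm :
    Measure.QuasiMeasurePreserving Complex.polarCoord.symm
      (volume.restrict polarCoord.target) := by
  have hmeas : Measurable Complex.polarCoord.symm :=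
    measurableEquivRealProd.symm.measurable.comp continuous_polarCoord_symm.measurable
  refine ⟨hmeas, Measure.AbsolutelyContinuous.mk fun s hs hs0 => ?_⟩
  have hintegrand : Measurable fun q : ℝ × ℝ =>
      ENNReal.ofReal q.1 • s.indicator (1 : ℂ → ENNReal) (Complex.polarCoord.symm q) :=
    measurable_fst.ennreal_ofReal.smul ((measurable_one.indicator hs).comp hmeas)
  have hlintegral := Complex.lintegral_comp_polarCoord_symm (s.indicator 1)
  rw [lintegral_indicator_one hs, hs0, lintegral_eq_zero_iff hintegrand] at hlintegral
  rw [Measure.map_apply hmeas hs, measure_eq_zero_iff_ae_notMem]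
  filter_upwards [hlintegral, ae_restrict_mem polarCoord.open_target.measurableSet]
    with q hq hq0 hqs
  have hpos : 0 < q.1 := hq0.1
  simp only [indicator_of_mem (mem_preimage.1 hqs), Pi.one_apply, smul_eq_mul, mul_one,
    Pi.zero_apply, ENNReal.ofReal_eq_zero] at hq
  exact hpos.not_ge hq

lemma lintegral_eq_lintegral_circleMap {F : ℂ → ENNReal} (hF : AEMeasurable F) :
    ∫⁻ z, F z =
      ∫⁻ r in Ioi (0 : ℝ), ENNReal.ofReal r * ∫⁻ θ in Ioo (-π) π, F (circleMap 0 r θ) := by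
  have hpolar (r θ : ℝ) : Complex.polarCoord.symm (r, θ) = circleMap 0 r θ := by
    rw [Complex.polarCoord_symm_apply, circleMap_zero, exp_mul_I, ofReal_cos, ofReal_sin]
  have hmeas : AEMeasurable
      (fun q : ℝ × ℝ => ENNReal.ofReal q.1 * F (Complex.polarCoord.symm q))
      (volume.restrict polarCoord.target) :=
    measurable_fst.ennreal_ofReal.aemeasurable.mul
      (hF.comp_quasiMeasurePreserving quasiMeasurePreserving_polarCoord_symm)
  rw [← Complex.lintegral_comp_polarCoord_symm]
  simp only [smul_eq_mul]
  rw [polarCoord_target, Measure.volume_eq_prod, ← Measure.prod_restrict] at hmeas ⊢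
  rw [lintegral_prod _ hmeas]
  simp only [hpolar]
  exact lintegral_congr fun r => lintegral_const_mul' _ _ ENNReal.ofReal_ne_top

lemma setLIntegral_ball_eq_lintegral_circleMap {F : ℂ → ENNReal} {R : ℝ}
    (hF : AEMeasurable F (volume.restrict (ball 0 R))) :
    ∫⁻ z in ball 0 R, F z =
      ∫⁻ r in Ioo 0 R, ENNReal.ofReal r * ∫⁻ θ in Ioo (-π) π, F (circleMap 0 r θ) := by
  have hIoo : Ioo 0 R = Iio R ∩ Ioi 0 := by rw [inter_comm, Ioi_inter_Iio]
  rw [← lintegral_indicator measurableSet_ball, lintegral_eq_lintegral_circleMap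
    ((aemeasurable_indicator_iff measurableSet_ball).2 hF), hIoo,
    ← Measure.restrict_restrict measurableSet_Iio, ← lintegral_indicator measurableSet_Iio]
  refine setLIntegral_congr_fun measurableSet_Ioi fun r hr => ?_
  have hmem (θ : ℝ) : circleMap 0 r θ ∈ ball 0 R ↔ r ∈ Iio R := by
    rw [mem_ball_zero_iff, norm_circleMap_zero, abs_of_pos hr, mem_Iio]
  by_cases hrR : r ∈ Iio R
  · simp only [indicator_of_mem hrR, indicator_of_mem ((hmem _).2 hrR)]
  · simp only [indicator_of_notMem hrR, indicator_of_notMem (mt (hmem _).1 hrR), lintegral_zero,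
      mul_zero]

lemma quasiMeasurePreserving_norm :
    Measure.QuasiMeasurePreserving (fun z : ℂ => ‖z‖) := by
  refine ⟨measurable_norm, Measure.AbsolutelyContinuous.mk fun s hs hs0 => ?_⟩
  have hmeas : MeasurableSet ((fun z : ℂ => ‖z‖) ⁻¹' s) := measurable_norm hs
  rw [Measure.map_apply measurable_norm hs, ← lintegral_indicator_one hmeas,
    lintegral_eq_lintegral_circleMap (measurable_one.indicator hmeas).aemeasurable]
  refine (lintegral_congr_ae ?_).trans lintegral_zero
  filter_upwards [ae_restrict_of_ae (measure_eq_zero_iff_ae_notMem.1 hs0),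
    ae_restrict_mem measurableSet_Ioi] with r hr hr0
  have hnotMem (θ : ℝ) : circleMap 0 r θ ∉ (fun z : ℂ => ‖z‖) ⁻¹' s := by
    rwa [mem_preimage, norm_circleMap_zero, abs_of_pos hr0]
  simp only [indicator_of_notMem (hnotMem _), lintegral_zero, mul_zero]

lemma aemeasurable_comp_norm {E : Type*} [MeasurableSpace E] {w : ℝ → E} {R : ℝ}
    (hw : AEMeasurable w (volume.restrict (Ico 0 R))) :
    AEMeasurable (fun z : ℂ => w ‖z‖) (volume.restrict (ball 0 R)) :=
  hw.comp_quasiMeasurePreserving (quasiMeasurePreserving_norm.restrict fun z hz =>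
    ⟨norm_nonneg z, mem_ball_zero_iff.1 hz⟩)

lemma setLIntegral_ball_radial_mul_le_of_circles {F G : ℂ → ENNReal} {w : ℝ → ENNReal} {R : ℝ}
    {C : ENNReal} (hF : AEMeasurable F (volume.restrict (ball 0 R)))
    (hG : AEMeasurable G (volume.restrict (ball 0 R)))
    (hw : AEMeasurable w (volume.restrict (Ico 0 R))) (hw_top : ∀ r, w r ≠ ⊤) (hC : C ≠ ⊤)
    (hFG : ∀ r ∈ Ioo 0 R, ∫⁻ θ in Ioo (-π) π, F (circleMap 0 r θ) ≤
      C * ∫⁻ θ in Ioo (-π) π, G (circleMap 0 r θ)) :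
    ∫⁻ z in ball 0 R, w ‖z‖ * F z ≤ C * ∫⁻ z in ball 0 R, w ‖z‖ * G z := by
  have hpolar {H : ℂ → ENNReal} (hH : AEMeasurable H (volume.restrict (ball 0 R))) :=
    setLIntegral_ball_eq_lintegral_circleMap (F := fun z => w ‖z‖ * H z)
      ((aemeasurable_comp_norm hw).mul hH)
  rw [hpolar hF, hpolar hG, ← lintegral_const_mul' _ _ hC]
  simp only [norm_circleMap_zero, lintegral_const_mul' _ _ (hw_top _)]
  refine setLIntegral_mono' measurableSet_Ioo fun r hr => ?_
  calc
    _ ≤ ENNReal.ofReal r * (w |r| * (C * ∫⁻ θ in Ioo (-π) π, G (circleMap 0 r θ))) := by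
      gcongr
      exact hFG r hr
    _ = _ := by ring

end Polar

section RadialWeights

open Metric Complex
open scoped Real

lemma differentiableOn_comp_ofReal_mul {f : ℂ → ℂ} {r : ℝ} (hr : 0 < r)
    (hf : DifferentiableOn ℂ f (ball 0 1)) :
    DifferentiableOn ℂ (fun z : ℂ => f (r * z)) (ball 0 r⁻¹) := by
  refine hf.comp (by fun_prop) fun z hz => ?_
  rw [mem_ball_zero_iff] at hz ⊢
  rw [norm_mul, norm_real, Real.norm_of_nonneg hr.le, ← mul_inv_cancel₀ hr.ne']
  exact mul_lt_mul_of_pos_left hz hr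

lemma exists_lintegral_circleMap_norm_ntang_equiv {p : ℝ} (hp : 0 < p) : ∃ C : ℝ, 0 < C ∧
    ∀ f : ℂ → ℂ, DifferentiableOn ℂ f (ball 0 1) → (f 0).im = 0 → ∀ r ∈ Ioo (0 : ℝ) 1,
      ∫⁻ θ in Ioo (-π) π, ENNReal.ofReal (‖f (circleMap 0 r θ)‖ ^ p) ≤
        ENNReal.ofReal C * ∫⁻ θ in Ioo (-π) π,
          ENNReal.ofReal (Ntang (fun z => (f z).re) (circleMap 0 r θ) ^ p) ∧
      ∫⁻ θ in Ioo (-π) π, ENNReal.ofReal (Ntang (fun z => (f z).re) (circleMap 0 r θ) ^ p) ≤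
        ENNReal.ofReal C * ∫⁻ θ in Ioo (-π) π, ENNReal.ofReal (‖f (circleMap 0 r θ)‖ ^ p) := by
  obtain ⟨C₁, hC₁, hnorm⟩ := exists_lintegral_norm_rpow_le hp
  obtain ⟨C₂, -, hntang⟩ := exists_lintegral_ntang_re_rpow_le hp
  refine ⟨max C₁ C₂, lt_max_of_lt_left hC₁, fun f hf hf0 r hr => ?_⟩
  have hdilation := differentiableOn_comp_ofReal_mul hr.1 hf
  have hR : 1 < r⁻¹ := (one_lt_inv₀ hr.1).2 hr.2
  have hcircle (θ : ℝ) : circleMap 0 r θ = r * circleMap 0 1 θ := by simp [circleMap_zero]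
  have hN (θ : ℝ) : Ntang (fun z => (f z).re) (circleMap 0 r θ) =
      Ntang (fun z => (f (r * z)).re) (circleMap 0 1 θ) := by
    rw [hcircle, ntang_ofReal_mul hr.1 hr.2.le (by simp) (circleMap_ne_center one_ne_zero)]
  simp only [hN]
  simp only [hcircle]
  constructor
  · refine (hnorm _ hR _ hdilation (by rwa [mul_zero])).trans ?_
    gcongr
    exact le_max_left _ _
  · refine (hntang _ hR _ hdilation).trans ?_
    gcongr
    exact le_max_right _ _

theorem exists_setLIntegral_ball_norm_ntang_equiv {p : ℝ} (hp : 0 < p) : ∃ C : ℝ, 0 < C ∧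
    ∀ w : ℝ → ENNReal, AEMeasurable w (volume.restrict (Ico 0 1)) → (∀ r, w r ≠ ⊤) →
    ∀ f : ℂ → ℂ, DifferentiableOn ℂ f (ball 0 1) → (f 0).im = 0 →
      ∫⁻ z in ball 0 1, w ‖z‖ * ENNReal.ofReal (‖f z‖ ^ p) ≤
        ENNReal.ofReal C * ∫⁻ z in ball 0 1,
          w ‖z‖ * ENNReal.ofReal (Ntang (fun z => (f z).re) z ^ p) ∧
      ∫⁻ z in ball 0 1, w ‖z‖ * ENNReal.ofReal (Ntang (fun z => (f z).re) z ^ p) ≤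
        ENNReal.ofReal C * ∫⁻ z in ball 0 1, w ‖z‖ * ENNReal.ofReal (‖f z‖ ^ p) := by
  obtain ⟨C, hC, hcircle⟩ := exists_lintegral_circleMap_norm_ntang_equiv hp
  refine ⟨C, hC, fun w hw hw_top f hf hf0 => ?_⟩
  have hnorm : AEMeasurable (fun z => ENNReal.ofReal (‖f z‖ ^ p)) (volume.restrict (ball 0 1)) :=
    ((hf.continuousOn.aemeasurable measurableSet_ball).norm.pow_const p).ennreal_ofReal
  have hntang : AEMeasurable (fun z => ENNReal.ofReal (Ntang (fun z => (f z).re) z ^ p))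
      (volume.restrict (ball 0 1)) :=
    ((aemeasurable_ntang (continuous_re.comp_continuousOn hf.continuousOn)).pow_const
      p).ennreal_ofReal
  exact ⟨setLIntegral_ball_radial_mul_le_of_circles hnorm hntang hw hw_top ENNReal.ofReal_ne_top
      fun r hr => (hcircle f hf hf0 r hr).1,
    setLIntegral_ball_radial_mul_le_of_circles hntang hnorm hw hw_top ENNReal.ofReal_ne_top
      fun r hr => (hcircle f hf hf0 r hr).2⟩

lemma setIntegral_ball_mul_radial_eq_toReal {g : ℂ → ℝ} {ω : ℝ → ℝ} {R : ℝ} (hg0 : ∀ z, 0 ≤ g z)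
    (hg : AEMeasurable g (volume.restrict (ball 0 R))) (hω0 : ∀ r ∈ Ico 0 R, 0 ≤ ω r)
    (hω : AEMeasurable ω (volume.restrict (Ico 0 R))) :
    ∫ z in ball 0 R, g z * ω ‖z‖ =
      (∫⁻ z in ball 0 R, ENNReal.ofReal (ω ‖z‖) * ENNReal.ofReal (g z)).toReal := by
  have hnonneg : 0 ≤ᵐ[volume.restrict (ball 0 R)] fun z => g z * ω ‖z‖ := by
    filter_upwards [ae_restrict_mem measurableSet_ball] with z hz
    exact mul_nonneg (hg0 z) (hω0 _ ⟨norm_nonneg z, mem_ball_zero_iff.1 hz⟩)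
  rw [integral_eq_lintegral_of_nonneg_ae hnonneg
    (hg.mul (aemeasurable_comp_norm hω)).aestronglyMeasurable]
  simp only [ENNReal.ofReal_mul (hg0 _), mul_comm]

/- The reverse comparison settles the case `B = ∞`, where `toReal` has the junk value `0`. -/
lemma toReal_le_mul_toReal_of_le_of_le {A B D : ENNReal} {C : ℝ} (hC : 0 ≤ C)
    (hAB : A ≤ ENNReal.ofReal C * B) (hBA : B ≤ D * A) (hD : D ≠ ⊤) :
    A.toReal ≤ C * B.toReal := by
  rcases eq_or_ne B ⊤ with rfl | hB
  · have hA : A = ⊤ := by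
      by_contra hA
      exact ENNReal.mul_ne_top hD hA (top_le_iff.1 hBA)
    simp [hA]
  · calc A.toReal ≤ (ENNReal.ofReal C * B).toReal :=
        ENNReal.toReal_mono (ENNReal.mul_ne_top ENNReal.ofReal_ne_top hB) hAB
      _ = C * B.toReal := by rw [ENNReal.toReal_mul, ENNReal.toReal_ofReal hC]

end RadialWeights

section Norms

variable {p : ℝ} {ω : ℝ → ℝ} {f : ℂ → ℂ}

lemma apNorm_eq_toReal (hω : RadialWeight ω) (hf : ContinuousOn f (Metric.ball 0 1)) :
    ApNorm p ω f = Real.pi⁻¹ * (∫⁻ z in Metric.ball (0 : ℂ) 1,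
      ENNReal.ofReal (ω ‖z‖) * ENNReal.ofReal (‖f z‖ ^ p)).toReal := by
  rw [ApNorm, setIntegral_ball_mul_radial_eq_toReal (fun z => by positivity)
    ((hf.aemeasurable measurableSet_ball).norm.pow_const p) hω.1 hω.2.1.aemeasurable]

lemma npNorm_eq_toReal (hω : RadialWeight ω) (hf : ContinuousOn f (Metric.ball 0 1)) :
    NpNorm p ω f = Real.pi⁻¹ * (∫⁻ z in Metric.ball (0 : ℂ) 1,
      ENNReal.ofReal (ω ‖z‖) * ENNReal.ofReal (Ntang (fun z => (f z).re) z ^ p)).toReal := by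
  have hre : ContinuousOn (fun z => (f z).re) (Metric.ball 0 1) :=
    Complex.continuous_re.comp_continuousOn hf
  rw [NpNorm, setIntegral_ball_mul_radial_eq_toReal
    (fun z => Real.rpow_nonneg (ntang_nonneg _ z) p) ((aemeasurable_ntang hre).pow_const p) hω.1
    hω.2.1.aemeasurable]

end Norms

/-- For `0 < p < ∞` and a radial weight `ω`, there is `C = C(p) > 0` with
`C⁻¹ ‖f‖_{A^p_ω} ≤ ‖N(Re f)‖_{L^p_ω} ≤ C ‖f‖_{A^p_ω}` for every analytic `f` on `𝔻`
with `Im f(0) = 0` (norms stated via their `p`-th powers). -/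
theorem statement0 (p : ℝ) (hp : 0 < p) :
    ∃ C : ℝ, 0 < C ∧ ∀ ω : ℝ → ℝ, RadialWeight ω →
      ∀ f : ℂ → ℂ, DifferentiableOn ℂ f (Metric.ball (0:ℂ) 1) → (f 0).im = 0 →
        C⁻¹ * ApNorm p ω f ≤ NpNorm p ω f ∧ NpNorm p ω f ≤ C * ApNorm p ω f := by
  obtain ⟨C, hC, hequiv⟩ := exists_setLIntegral_ball_norm_ntang_equiv hp
  refine ⟨C, hC, fun ω hω f hf hf0 => ?_⟩
  obtain ⟨hnorm, hntang⟩ := hequiv (fun r => ENNReal.ofReal (ω r))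
    hω.2.1.aemeasurable.ennreal_ofReal (fun r => ENNReal.ofReal_ne_top) f hf hf0
  rw [inv_mul_le_iff₀ hC, apNorm_eq_toReal hω hf.continuousOn, npNorm_eq_toReal hω hf.continuousOn,
    mul_left_comm C, mul_left_comm C]
  constructor <;> refine mul_le_mul_of_nonneg_left ?_ (inv_nonneg.2 Real.pi_pos.le)
  · exact toReal_le_mul_toReal_of_le_of_le hC.le hnorm hntang ENNReal.ofReal_ne_top
  · exact toReal_le_mul_toReal_of_le_of_le hC.le hntang hnorm ENNReal.ofReal_ne_top
end

section
/- There exists a radial weight ω such that ω ∉ D̂ but its associated weight ω̃ belongs to D̂ (in particular ω̃ is a weight). -/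
open MeasureTheory Set

/-!
Doubling of `ω̂` compares values at `r` and `(1 + r) / 2`, whereas the tail of `ω̃` averages `ω̂`
against `dr / (1 - r)`, so a steep drop of `ω̂` is harmless for `ω̃` as soon as `ω̂` then stays
constant over a range of `log (1 / (1 - r))` at least as long as the factor lost in the drop.
Let `ω` be a sum of bumps of mass `1 / n!` at distance between `t_n / 2` and `t_n` from `1`, where
`t_n = 4 ^ (-(n + 1) ^ 2)`. Across the `n`-th bump `ω̂` drops by a factor of order `n + 1`, which is
unbounded, and the plateau that follows has logarithmic length `log (t_n / t_{n + 1})`, also of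
order `n + 1`. By Tonelli `∫ ω̃` is at most `∑ log (2 / t_n) / n!`, which is finite.
-/

open Filter Topology

section Series

variable {α E ι : Type*} [MeasurableSpace α] {μ : Measure α} [NormedAddCommGroup E]
  [CompleteSpace E] [Countable ι]

lemma integrable_tsum_of_summable_integral_norm {F : ι → α → E} (hF : ∀ i, Integrable (F i) μ)
    (hsum : Summable fun i => ∫ a, ‖F i a‖ ∂μ) : Integrable (fun a => ∑' i, F i a) μ := by
  have hL1 : ∑' i, ‖(hF i).toL1 (F i)‖ₑ ≠ ⊤ := by
    rw [tsum_enorm_ne_top_iff_summable_norm]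
    simpa only [L1.norm_of_fun_eq_integral_norm] using hsum
  refine (L1.integrable_coeFn (∑' i, (hF i).toL1 (F i))).congr ?_
  filter_upwards [Lp.coeFn_tsum hL1, ae_all_iff.2 fun i => (hF i).coeFn_toL1] with a hlim hterm
  simp only [hlim, hterm]

end Series

section TailIntegral

variable {f : ℝ → ℝ} {a b : ℝ}

lemma tailInt_eq_setIntegral_Ico (ha : a ≤ 1) : tailInt f a = ∫ s in Ico a 1, f s := by
  rw [tailInt, intervalIntegral.integral_of_le ha, integral_Ico_eq_integral_Ioc]

lemma tailInt_nonneg (hf : ∀ r ∈ Ico (0 : ℝ) 1, 0 ≤ f r) (ha₀ : 0 ≤ a) (ha₁ : a ≤ 1) :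
    0 ≤ tailInt f a := by
  rw [tailInt_eq_setIntegral_Ico ha₁]
  exact setIntegral_nonneg measurableSet_Ico fun s hs => hf s ⟨ha₀.trans hs.1, hs.2⟩

lemma antitoneOn_tailInt (hf : ∀ r ∈ Ico (0 : ℝ) 1, 0 ≤ f r) (hint : IntegrableOn f (Ico 0 1)) :
    AntitoneOn (tailInt f) (Icc 0 1) := by
  intro a ha b hb hab
  rw [tailInt_eq_setIntegral_Ico ha.2, tailInt_eq_setIntegral_Ico hb.2]
  refine setIntegral_mono_set (hint.mono_set (Ico_subset_Ico_left ha.1)) ?_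
    (Ico_subset_Ico_left hab).eventuallyLE
  exact ae_restrict_of_forall_mem measurableSet_Ico fun s hs => hf s ⟨ha.1.trans hs.1, hs.2⟩

lemma intervalIntegrable_of_integrableOn_Ico (hint : IntegrableOn f (Ico 0 1))
    (ha : a ∈ Icc (0 : ℝ) 1) (hb : b ∈ Icc (0 : ℝ) 1) : IntervalIntegrable f volume a b :=
  intervalIntegrable_iff.2 <| ((integrableOn_Icc_iff_integrableOn_Ico).2 hint).mono_set <|
    uIoc_subset_uIcc.trans (uIcc_subset_Icc ha hb)

lemma intervalIntegral_add_tailInt (hint : IntegrableOn f (Ico 0 1)) (ha : a ∈ Icc (0 : ℝ) 1)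
    (hb : b ∈ Icc (0 : ℝ) 1) : (∫ s in a..b, f s) + tailInt f b = tailInt f a :=
  intervalIntegral.integral_add_adjacent_intervals
    (intervalIntegrable_of_integrableOn_Ico hint ha hb)
    (intervalIntegrable_of_integrableOn_Ico hint hb (right_mem_Icc.2 zero_le_one))

lemma intervalIntegrable_inv_one_sub (ha : a < 1) (hb : b < 1) :
    IntervalIntegrable (fun r : ℝ => (1 - r)⁻¹) volume a b := by
  refine ContinuousOn.intervalIntegrable (ContinuousOn.inv₀ (by fun_prop) fun x hx => ?_)
  exact (sub_pos.2 (hx.2.trans_lt (max_lt ha hb))).ne'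

lemma integral_inv_one_sub (ha : a < 1) (hb : b < 1) :
    ∫ r in a..b, (1 - r)⁻¹ = Real.log ((1 - a) / (1 - b)) := by
  rw [intervalIntegral.integral_comp_sub_left (fun x => x⁻¹) 1,
    integral_inv_of_pos (sub_pos.2 hb) (sub_pos.2 ha)]

end TailIntegral

section AssocKernel

/-- The kernel `1_{r < s} ω(s) / (1 - r)`, whose integral in `s` over `[0, 1)` is `ω̃(r)`. -/
noncomputable def assocKernel (ω : ℝ → ℝ) : ℝ × ℝ → ℝ :=
  {p | p.1 < p.2}.indicator fun p => ω p.2 * (1 - p.1)⁻¹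

variable {ω : ℝ → ℝ} {r s : ℝ}

lemma integral_assocKernel (hr₀ : 0 ≤ r) (hr₁ : r ≤ 1) :
    ∫ s in Ico 0 1, assocKernel ω (r, s) = assocW ω r := by
  have hslice : (fun s => assocKernel ω (r, s)) = (Ioi r).indicator fun s => ω s * (1 - r)⁻¹ := rfl
  have hinter : Ico 0 1 ∩ Ioi r = Ioo r 1 := by
    ext s
    simp only [mem_inter_iff, mem_Ico, mem_Ioi, mem_Ioo]
    exact ⟨fun h => ⟨h.2, h.1.2⟩, fun h => ⟨⟨hr₀.trans h.1.le, h.2⟩, h.1⟩⟩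
  rw [hslice, setIntegral_indicator measurableSet_Ioi, hinter, integral_mul_const,
    ← integral_Ico_eq_integral_Ioo, ← tailInt_eq_setIntegral_Ico hr₁, assocW, div_eq_mul_inv]

lemma assocKernel_left (s : ℝ) : (fun r => assocKernel ω (r, s)) =
    (Iio s).indicator fun r => ω s * (1 - r)⁻¹ := rfl

lemma integrableOn_assocKernel (hs₀ : 0 ≤ s) (hs₁ : s < 1) :
    IntegrableOn (fun r => assocKernel ω (r, s)) (Ico 0 1) := by
  rw [assocKernel_left, IntegrableOn, integrable_indicator_iff measurableSet_Iio, IntegrableOn,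
    Measure.restrict_restrict measurableSet_Iio, inter_comm, Ico_inter_Iio, min_eq_right hs₁.le]
  exact ((intervalIntegrable_iff_integrableOn_Ico_of_le hs₀).1
    (intervalIntegrable_inv_one_sub one_pos hs₁)).const_mul _

lemma integral_norm_assocKernel (hs₀ : 0 ≤ s) (hs₁ : s < 1) (hω : 0 ≤ ω s) :
    ∫ r in Ico 0 1, ‖assocKernel ω (r, s)‖ = ω s * -Real.log (1 - s) := by
  have hnonneg : ∀ r ∈ Ico (0 : ℝ) 1, ‖assocKernel ω (r, s)‖ = assocKernel ω (r, s) :=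
    fun r hr => Real.norm_of_nonneg <|
      indicator_apply_nonneg fun _ => mul_nonneg hω (inv_nonneg.2 (sub_nonneg.2 hr.2.le))
  rw [setIntegral_congr_fun measurableSet_Ico hnonneg, assocKernel_left,
    setIntegral_indicator measurableSet_Iio, Ico_inter_Iio, min_eq_right hs₁.le, integral_const_mul,
    integral_Ico_eq_integral_Ioc, ← intervalIntegral.integral_of_le hs₀,
    integral_inv_one_sub one_pos hs₁, sub_zero, one_div, Real.log_inv]

end AssocKernel

namespace RadialWeight

variable {ω : ℝ → ℝ} {a b C : ℝ}

lemma assocW_nonneg (hω : RadialWeight ω) : ∀ r ∈ Ico (0 : ℝ) 1, 0 ≤ assocW ω r :=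
  fun r hr => div_nonneg (hω.2.2 r hr).le (sub_nonneg.2 hr.2.le)

/-- By Tonelli, `∫ ω̃(r) dr = ∫ ω(s) log (1 / (1 - s)) ds`. -/
lemma integrableOn_assocW (hω : RadialWeight ω)
    (hlog : IntegrableOn (fun s => ω s * Real.log (1 - s)) (Ico 0 1)) :
    IntegrableOn (assocW ω) (Ico 0 1) := by
  have hmeas : AEStronglyMeasurable (assocKernel ω)
      ((volume.restrict (Ico 0 1)).prod (volume.restrict (Ico 0 1))) :=
    (hω.2.1.1.comp_snd.mul (by fun_prop)).indicator (measurableSet_lt measurable_fst measurable_snd)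
  have hkernel := (integrable_prod_iff' hmeas).2
    ⟨ae_restrict_of_forall_mem measurableSet_Ico fun s hs => integrableOn_assocKernel hs.1 hs.2,
      hlog.neg.congr <| ae_restrict_of_forall_mem measurableSet_Ico fun s hs => by
        simp only [Pi.neg_apply, integral_norm_assocKernel hs.1 hs.2 (hω.1 s hs), mul_neg]⟩
  exact hkernel.integral_prod_left.congr <|
    ae_restrict_of_forall_mem measurableSet_Ico fun r hr => integral_assocKernel hr.1 hr.2.le

lemma tailInt_mul_log_le_tailInt_assocW (hω : RadialWeight ω)
    (hint : IntegrableOn (assocW ω) (Ico 0 1)) (ha : 0 ≤ a) (hab : a ≤ b) (hb : b < 1) :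
    tailInt ω b * Real.log ((1 - a) / (1 - b)) ≤ tailInt (assocW ω) a := by
  have hb_mem : b ∈ Icc (0 : ℝ) 1 := ⟨ha.trans hab, hb.le⟩
  have ha_mem : a ∈ Icc (0 : ℝ) 1 := ⟨ha, hab.trans hb.le⟩
  have hpointwise : ∀ s ∈ Icc a b, tailInt ω b * (1 - s)⁻¹ ≤ assocW ω s := fun s hs =>
    mul_le_mul_of_nonneg_right
      (antitoneOn_tailInt hω.1 hω.2.1 ⟨ha.trans hs.1, hs.2.trans hb.le⟩ hb_mem hs.2)
      (inv_nonneg.2 (sub_nonneg.2 (hs.2.trans hb.le)))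
  calc tailInt ω b * Real.log ((1 - a) / (1 - b))
      = ∫ s in a..b, tailInt ω b * (1 - s)⁻¹ := by
        rw [intervalIntegral.integral_const_mul, integral_inv_one_sub (hab.trans_lt hb) hb]
    _ ≤ ∫ s in a..b, assocW ω s :=
        intervalIntegral.integral_mono_on hab
          ((intervalIntegrable_inv_one_sub (hab.trans_lt hb) hb).const_mul _)
          (intervalIntegrable_of_integrableOn_Ico hint ha_mem hb_mem) hpointwise
    _ ≤ (∫ s in a..b, assocW ω s) + tailInt (assocW ω) b :=
        le_add_of_nonneg_right (tailInt_nonneg hω.assocW_nonneg hb_mem.1 hb_mem.2)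
    _ = tailInt (assocW ω) a := intervalIntegral_add_tailInt hint ha_mem hb_mem

lemma integral_assocW_le_tailInt (hω : RadialWeight ω)
    (hint : IntegrableOn (assocW ω) (Ico 0 1)) (ha : a ∈ Ico (0 : ℝ) 1) :
    ∫ s in a..(1 + a) / 2, assocW ω s ≤ tailInt ω a := by
  obtain ⟨ha₀, ha₁⟩ := ha
  have hmid : a ≤ (1 + a) / 2 := by linarith
  have hpointwise : ∀ s ∈ Icc a ((1 + a) / 2), assocW ω s ≤ tailInt ω a / ((1 - a) / 2) :=
    fun s ⟨has, hsb⟩ => div_le_div₀ (hω.2.2 a ⟨ha₀, ha₁⟩).le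
      (antitoneOn_tailInt hω.1 hω.2.1 ⟨ha₀, ha₁.le⟩ ⟨ha₀.trans has, by linarith⟩ has)
      (by linarith) (by linarith)
  calc ∫ s in a..(1 + a) / 2, assocW ω s
      ≤ ∫ _ in a..(1 + a) / 2, tailInt ω a / ((1 - a) / 2) :=
        intervalIntegral.integral_mono_on hmid
          (intervalIntegrable_of_integrableOn_Ico hint ⟨ha₀, ha₁.le⟩ ⟨by linarith, by linarith⟩)
          intervalIntegrable_const hpointwise
    _ = tailInt ω a := by
        have : 1 - a ≠ 0 := by linarith
        rw [intervalIntegral.integral_const, smul_eq_mul]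
        field_simp
        ring

lemma dhat_assocW (hω : RadialWeight ω) (hint : IntegrableOn (assocW ω) (Ico 0 1)) (hC : 0 ≤ C)
    (h : ∀ r ∈ Ico (0 : ℝ) 1, tailInt ω r ≤ C * tailInt (assocW ω) ((1 + r) / 2)) :
    Dhat (assocW ω) := by
  refine ⟨C + 1, by linarith, fun r hr => ?_⟩
  have hsplit := intervalIntegral_add_tailInt (b := (1 + r) / 2) hint ⟨hr.1, hr.2.le⟩
    ⟨by linarith [hr.1], by linarith [hr.2]⟩
  linarith [hω.integral_assocW_le_tailInt hint hr, h r hr]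

end RadialWeight

section Bump

/-- The bump of mass `m` spread uniformly over the points whose distance to `1` lies in
`[t / 2, t)`. -/
noncomputable def bump (m t : ℝ) : ℝ → ℝ :=
  (Ioc (1 - t) (1 - t / 2)).indicator fun _ => m / (t / 2)

variable {m t r : ℝ}

lemma bump_nonneg (hm : 0 ≤ m) (ht : 0 < t) (s : ℝ) : 0 ≤ bump m t s :=
  indicator_nonneg (fun _ _ => by positivity) s

lemma integrable_bump : Integrable (bump m t) :=
  (integrable_indicator_iff measurableSet_Ioc).2 (integrableOn_const measure_Ioc_lt_top.ne)

lemma integral_bump (ht : 0 < t) : ∫ s, bump m t s = m := by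
  rw [bump, integral_indicator_const _ measurableSet_Ioc, Real.volume_real_Ioc_of_le (by linarith),
    smul_eq_mul]
  field_simp
  ring

lemma tailInt_bump_nonneg (hm : 0 ≤ m) (ht : 0 < t) (hr : r ≤ 1) :
    0 ≤ tailInt (bump m t) r :=
  intervalIntegral.integral_nonneg hr fun s _ => bump_nonneg hm ht s

lemma tailInt_bump_le (hm : 0 ≤ m) (ht : 0 < t) (hr : r ≤ 1) : tailInt (bump m t) r ≤ m := by
  rw [tailInt, intervalIntegral.integral_of_le hr]
  exact (setIntegral_le_integral integrable_bump (.of_forall (bump_nonneg hm ht))).trans_eq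
    (integral_bump ht)

lemma tailInt_bump_of_le (ht : 0 < t) (hr : r ≤ 1 - t) : tailInt (bump m t) r = m := by
  rw [tailInt, intervalIntegral.integral_of_le (by linarith),
    setIntegral_eq_integral_of_forall_compl_eq_zero, integral_bump ht]
  exact fun s hs => indicator_of_notMem
    (fun hs' => hs ⟨hr.trans_lt hs'.1, hs'.2.trans (by linarith)⟩) _

lemma tailInt_bump_eq_zero (hr : r ≤ 1) (h : 1 - t / 2 ≤ r) : tailInt (bump m t) r = 0 := by
  rw [tailInt, intervalIntegral.integral_of_le hr]
  exact setIntegral_eq_zero_of_forall_eq_zero fun s hs =>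
    indicator_of_notMem (fun hs' => (h.trans_lt hs.1).not_ge hs'.2) _

lemma norm_bump_mul_log_le (hm : 0 ≤ m) (ht : 0 < t) {s : ℝ} (hs : s ∈ Ico (0 : ℝ) 1) :
    ‖bump m t s * Real.log (1 - s)‖ ≤ bump m t s * Real.log (2 / t) := by
  by_cases hmem : s ∈ Ioc (1 - t) (1 - t / 2)
  · have hlog : |Real.log (1 - s)| ≤ Real.log (2 / t) := by
      rw [abs_of_nonpos (Real.log_nonpos (by linarith [hs.2]) (by linarith [hs.1])),
        ← Real.log_inv, inv_eq_one_div]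
      exact Real.log_le_log (by have := hs.2; simpa using this)
        ((one_div_le_one_div_of_le (half_pos ht) (by linarith [hmem.2])).trans_eq (one_div_div _ _))
    rw [norm_mul, Real.norm_of_nonneg (bump_nonneg hm ht s)]
    exact mul_le_mul_of_nonneg_left hlog (bump_nonneg hm ht s)
  · simp [bump, indicator_of_notMem hmem]

lemma integrableOn_bump_mul_log (hm : 0 ≤ m) (ht : 0 < t) :
    IntegrableOn (fun s => bump m t s * Real.log (1 - s)) (Ico 0 1) :=
  (integrable_bump.mul_const (Real.log (2 / t))).integrableOn.mono'
    (integrable_bump.1.restrict.mul (Measurable.aestronglyMeasurable (by fun_prop)))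
    (ae_restrict_of_forall_mem measurableSet_Ico fun _ hs => norm_bump_mul_log_le hm ht hs)

lemma integral_norm_bump_mul_log_le (hm : 0 ≤ m) (ht : 0 < t) (ht₁ : t ≤ 1) :
    ∫ s in Ico 0 1, ‖bump m t s * Real.log (1 - s)‖ ≤ m * Real.log (2 / t) := by
  have hlog : 0 ≤ Real.log (2 / t) := Real.log_nonneg ((one_le_div ht).2 (ht₁.trans one_le_two))
  calc ∫ s in Ico 0 1, ‖bump m t s * Real.log (1 - s)‖
      ≤ ∫ s in Ico 0 1, bump m t s * Real.log (2 / t) :=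
        setIntegral_mono_on (integrableOn_bump_mul_log hm ht).norm
          (integrable_bump.mul_const _).integrableOn measurableSet_Ico
          fun s hs => norm_bump_mul_log_le hm ht hs
    _ ≤ ∫ s, bump m t s * Real.log (2 / t) :=
        setIntegral_le_integral (integrable_bump.mul_const _)
          (.of_forall fun s => mul_nonneg (bump_nonneg hm ht s) hlog)
    _ = m * Real.log (2 / t) := by rw [integral_mul_const, integral_bump ht]

end Bump

section BumpWeight

/-- The weight `∑ n, bump (m n) (t n)`, whose tail drops by `m n` across the distances
`[t n / 2, t n)` to `1`. The sum is pointwise. -/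
noncomputable def bumpWeight (m t : ℕ → ℝ) (s : ℝ) : ℝ := ∑' n, bump (m n) (t n) s

variable {m t : ℕ → ℝ} {r : ℝ}

lemma integrable_bumpWeight (hm : ∀ n, 0 ≤ m n) (ht : ∀ n, 0 < t n) (hsum : Summable m) :
    Integrable (bumpWeight m t) := by
  refine integrable_tsum_of_summable_integral_norm (fun n => integrable_bump) ?_
  simpa only [Real.norm_of_nonneg (bump_nonneg (hm _) (ht _) _), integral_bump (ht _)] using hsum

lemma hasSum_tailInt_bump (hm : ∀ n, 0 ≤ m n) (ht : ∀ n, 0 < t n) (hsum : Summable m)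
    (hr : r ≤ 1) :
    HasSum (fun n => tailInt (bump (m n) (t n)) r) (tailInt (bumpWeight m t) r) := by
  simp only [tailInt, intervalIntegral.integral_of_le hr]
  refine hasSum_integral_of_summable_integral_norm (fun n => integrable_bump.restrict) ?_
  refine hsum.of_nonneg_of_le (fun n => integral_nonneg fun s => norm_nonneg _) fun n => ?_
  simp only [Real.norm_of_nonneg (bump_nonneg (hm n) (ht n) _)]
  exact (intervalIntegral.integral_of_le hr).symm.trans_le (tailInt_bump_le (hm n) (ht n) hr)

lemma le_tailInt_bumpWeight (hm : ∀ n, 0 ≤ m n) (ht : ∀ n, 0 < t n) (hsum : Summable m) {n : ℕ}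
    (hr : r ≤ 1 - t n) : m n ≤ tailInt (bumpWeight m t) r := by
  have hr₁ : r ≤ 1 := by linarith [ht n]
  rw [← tailInt_bump_of_le (m := m n) (ht n) hr]
  exact le_hasSum (hasSum_tailInt_bump hm ht hsum hr₁) n
    fun k _ => tailInt_bump_nonneg (hm k) (ht k) hr₁

lemma tailInt_bumpWeight_le (hm : ∀ n, 0 ≤ m n) (ht : ∀ n, 0 < t n) (hsum : Summable m) {n : ℕ}
    (hr : r ≤ 1) (h : ∀ k < n, 1 - t k / 2 ≤ r) :
    tailInt (bumpWeight m t) r ≤ ∑' k, m (k + n) := by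
  have htail := hasSum_tailInt_bump hm ht hsum hr
  have hzero : ∑ k ∈ Finset.range n, tailInt (bump (m k) (t k)) r = 0 :=
    Finset.sum_eq_zero fun k hk => tailInt_bump_eq_zero hr (h k (Finset.mem_range.1 hk))
  have hshift := (hasSum_nat_add_iff' n).2 htail
  rw [hzero, sub_zero] at hshift
  exact hasSum_le (fun k => tailInt_bump_le (hm _) (ht _) hr) hshift
    ((summable_nat_add_iff n).2 hsum).hasSum

lemma radialWeight_bumpWeight (hm : ∀ n, 0 < m n) (ht : ∀ n, 0 < t n) (hsum : Summable m)
    (hlim : Tendsto t atTop (𝓝 0)) : RadialWeight (bumpWeight m t) := by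
  have hm' := fun n => (hm n).le
  refine ⟨fun r _ => tsum_nonneg fun n => bump_nonneg (hm' n) (ht n) r,
    (integrable_bumpWeight hm' ht hsum).integrableOn, fun r hr => ?_⟩
  obtain ⟨n, hn⟩ := (hlim.eventually_lt_const (sub_pos.2 hr.2)).exists
  exact (hm n).trans_le (le_tailInt_bumpWeight hm' ht hsum (by linarith))

lemma not_dhat_bumpWeight (hm : ∀ n, 0 ≤ m n) (ht : ∀ n, 0 < t n) (hsum : Summable m)
    (ht₁ : ∀ n, t n ≤ 1) (hanti : Antitone t)
    (hdrop : ∀ C, ∃ n, C * ∑' k, m (k + (n + 1)) < m n) : ¬ Dhat (bumpWeight m t) := by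
  rintro ⟨C, hC, hdoubling⟩
  obtain ⟨n, hn⟩ := hdrop C
  refine hn.not_ge ?_
  calc m n
      ≤ tailInt (bumpWeight m t) (1 - t n) := le_tailInt_bumpWeight hm ht hsum le_rfl
    _ ≤ C * tailInt (bumpWeight m t) ((1 + (1 - t n)) / 2) :=
        hdoubling _ ⟨by linarith [ht₁ n], by linarith [ht n]⟩
    _ ≤ C * ∑' k, m (k + (n + 1)) := by
        refine mul_le_mul_of_nonneg_left
          (tailInt_bumpWeight_le hm ht hsum (by linarith [ht n]) fun k hk => ?_) (by linarith)
        linarith [hanti (Nat.lt_succ_iff.1 hk)]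

lemma integrableOn_bumpWeight_mul_log (hm : ∀ n, 0 ≤ m n) (ht : ∀ n, 0 < t n)
    (ht₁ : ∀ n, t n ≤ 1) (hlog : Summable fun n => m n * Real.log (2 / t n)) :
    IntegrableOn (fun s => bumpWeight m t s * Real.log (1 - s)) (Ico 0 1) := by
  simp only [bumpWeight, ← tsum_mul_right]
  refine integrable_tsum_of_summable_integral_norm
    (fun n => integrableOn_bump_mul_log (hm n) (ht n)) ?_
  exact hlog.of_nonneg_of_le (fun n => integral_nonneg fun s => norm_nonneg _)
    fun n => integral_norm_bump_mul_log_le (hm n) (ht n) (ht₁ n)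

lemma exists_first_bump_beyond (hlim : Tendsto t atTop (𝓝 0)) (hr : r < 1) :
    ∃ n, t n / 2 < 1 - r ∧ ∀ k < n, 1 - t k / 2 ≤ r := by
  classical
  have hex : ∃ n, t n / 2 < 1 - r := by
    obtain ⟨n, hn⟩ :=
      (hlim.eventually_lt_const (mul_pos two_pos (sub_pos.2 hr))).exists
    exact ⟨n, by linarith⟩
  exact ⟨Nat.find hex, Nat.find_spec hex, fun k hk => by linarith [not_lt.1 (Nat.find_min hex hk)]⟩

lemma dhat_assocW_bumpWeight (hm : ∀ n, 0 < m n) (ht : ∀ n, 0 < t n) (hsum : Summable m)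
    (hlim : Tendsto t atTop (𝓝 0)) (hint : IntegrableOn (assocW (bumpWeight m t)) (Ico 0 1))
    (hlac : ∀ n, 4 * t (n + 1) ≤ t n) {C : ℝ} (hC : 0 ≤ C)
    (hplateau : ∀ n, ∑' k, m (k + n) ≤ C * (m (n + 1) * Real.log (t n / (4 * t (n + 1))))) :
    Dhat (assocW (bumpWeight m t)) := by
  have hm' := fun n => (hm n).le
  have hω := radialWeight_bumpWeight hm ht hsum hlim
  refine hω.dhat_assocW hint hC fun r hr => ?_
  obtain ⟨n, hn, hfirst⟩ := exists_first_bump_beyond hlim hr.2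
  have ht' := ht (n + 1)
  have hlog_nonneg : 0 ≤ Real.log (t n / (4 * t (n + 1))) :=
    Real.log_nonneg ((one_le_div (by positivity)).2 (hlac n))
  have hlog_le : Real.log (t n / (4 * t (n + 1))) ≤
      Real.log ((1 - (1 + r) / 2) / (1 - (1 - t (n + 1)))) := by
    refine Real.log_le_log (div_pos (ht n) (by positivity)) ?_
    rw [sub_sub_cancel, div_le_div_iff₀ (by positivity) ht']
    nlinarith
  calc tailInt (bumpWeight m t) r
      ≤ ∑' k, m (k + n) := tailInt_bumpWeight_le hm' ht hsum hr.2.le hfirst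
    _ ≤ C * (m (n + 1) * Real.log (t n / (4 * t (n + 1)))) := hplateau n
    _ ≤ C * (tailInt (bumpWeight m t) (1 - t (n + 1)) *
          Real.log ((1 - (1 + r) / 2) / (1 - (1 - t (n + 1))))) :=
        mul_le_mul_of_nonneg_left
          (mul_le_mul (le_tailInt_bumpWeight hm' ht hsum le_rfl) hlog_le hlog_nonneg
            ((hm' _).trans (le_tailInt_bumpWeight hm' ht hsum le_rfl))) hC
    _ ≤ C * tailInt (assocW (bumpWeight m t)) ((1 + r) / 2) :=
        mul_le_mul_of_nonneg_left (hω.tailInt_mul_log_le_tailInt_assocW hint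
          (by linarith [hr.1]) (by linarith [hlac n]) (by linarith)) hC

end BumpWeight

section Example

lemma summable_one_div_factorial : Summable fun n : ℕ => 1 / (n.factorial : ℝ) := by
  simpa only [one_pow] using Real.summable_pow_div_factorial 1

lemma tsum_one_div_factorial_add_le (n : ℕ) :
    ∑' k : ℕ, 1 / ((k + n).factorial : ℝ) ≤ Real.exp 1 / n.factorial := by
  have hexp : HasSum (fun k : ℕ => 1 / (k.factorial : ℝ)) (Real.exp 1) := by
    simpa only [one_pow, ← Real.exp_eq_exp_ℝ] using NormedSpace.expSeries_div_hasSum_exp (1 : ℝ)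
  refine hasSum_le (fun k => ?_) ((summable_nat_add_iff n).2 summable_one_div_factorial).hasSum
    (hexp.div_const _)
  rw [div_div]
  exact one_div_le_one_div_of_le (by positivity) (by
    exact_mod_cast Nat.le_of_dvd (Nat.factorial_pos _)
      (Nat.factorial_mul_factorial_dvd_factorial_add k n))

lemma exists_mul_tsum_one_div_factorial_lt (C : ℝ) :
    ∃ n : ℕ, C * ∑' k : ℕ, 1 / ((k + (n + 1)).factorial : ℝ) < 1 / n.factorial := by
  obtain ⟨n, hn⟩ := exists_nat_gt (|C| * Real.exp 1)
  refine ⟨n, ?_⟩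
  have hn' : |C| * Real.exp 1 < n + 1 := by linarith
  calc C * ∑' k : ℕ, 1 / ((k + (n + 1)).factorial : ℝ)
      ≤ |C| * (Real.exp 1 / (n + 1).factorial) :=
        mul_le_mul (le_abs_self C) (tsum_one_div_factorial_add_le _)
          (tsum_nonneg fun _ => by positivity) (abs_nonneg C)
    _ = |C| * Real.exp 1 / (n + 1) * (1 / n.factorial) := by
        rw [Nat.factorial_succ]
        push_cast
        field_simp
    _ < 1 / n.factorial :=
        mul_lt_of_lt_one_left (by positivity) ((div_lt_one (by positivity)).2 hn')

/-- The distances to `1` of the bumps of the example. Consecutive ratios grow so fast that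
`log (bumpDist n / bumpDist (n + 1))` matches the ratio `n + 1` of the masses `1 / n!`. -/
noncomputable def bumpDist (n : ℕ) : ℝ := (1 / 4) ^ (n + 1) ^ 2

lemma bumpDist_pos (n : ℕ) : 0 < bumpDist n := by
  unfold bumpDist
  positivity

lemma bumpDist_le_one (n : ℕ) : bumpDist n ≤ 1 :=
  pow_le_one₀ (by norm_num) (by norm_num)

lemma bumpDist_div (n : ℕ) : bumpDist n / (4 * bumpDist (n + 1)) = 4 ^ (2 * n + 2) := by
  have hexponent : (n + 1 + 1) ^ 2 = (n + 1) ^ 2 + (2 * n + 2) + 1 := by ring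
  rw [bumpDist, bumpDist, hexponent, pow_succ _ ((n + 1) ^ 2 + (2 * n + 2)), pow_add]
  simp only [one_div, inv_pow]
  field_simp

lemma four_mul_bumpDist_succ_le (n : ℕ) : 4 * bumpDist (n + 1) ≤ bumpDist n := by
  rw [← one_le_div (mul_pos four_pos (bumpDist_pos _)), bumpDist_div]
  exact one_le_pow₀ (by norm_num)

lemma antitone_bumpDist : Antitone bumpDist :=
  antitone_nat_of_succ_le fun n => by
    linarith [four_mul_bumpDist_succ_le n, bumpDist_pos (n + 1)]

lemma tendsto_bumpDist : Tendsto bumpDist atTop (𝓝 0) :=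
  (tendsto_pow_atTop_nhds_zero_of_lt_one (by norm_num) (by norm_num)).comp
    ((tendsto_pow_atTop two_ne_zero).comp (tendsto_add_atTop_nat 1))

lemma log_two_div_bumpDist_le (n : ℕ) : Real.log (2 / bumpDist n) ≤ 2 * 4 ^ n * Real.log 4 := by
  have hsq : ((n : ℝ) + 1) ^ 2 ≤ 4 ^ n := by
    have hlin : (n : ℝ) + 1 ≤ 2 ^ n := by exact_mod_cast Nat.lt_two_pow_self (n := n)
    calc ((n : ℝ) + 1) ^ 2 ≤ (2 ^ n) ^ 2 := by gcongr
      _ = 4 ^ n := by rw [← pow_mul, mul_comm, pow_mul]; norm_num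
  have hone : (1 : ℝ) ≤ 4 ^ n := one_le_pow₀ (by norm_num)
  have hlog : 0 < Real.log 4 := Real.log_pos (by norm_num)
  have hlog_two : Real.log 2 ≤ Real.log 4 := Real.log_le_log (by norm_num) (by norm_num)
  rw [Real.log_div two_ne_zero (bumpDist_pos n).ne', bumpDist, Real.log_pow, one_div, Real.log_inv]
  push_cast
  nlinarith

lemma summable_one_div_factorial_mul_log_bumpDist :
    Summable fun n : ℕ => 1 / (n.factorial : ℝ) * Real.log (2 / bumpDist n) := by
  refine ((Real.summable_pow_div_factorial 4).mul_right (2 * Real.log 4)).of_nonneg_of_le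
    (fun n => ?_) fun n => ?_
  · have := (one_le_div (bumpDist_pos n)).2 ((bumpDist_le_one n).trans one_le_two)
    exact mul_nonneg (by positivity) (Real.log_nonneg this)
  · calc 1 / (n.factorial : ℝ) * Real.log (2 / bumpDist n)
        ≤ 1 / (n.factorial : ℝ) * (2 * 4 ^ n * Real.log 4) := by
          gcongr
          exact log_two_div_bumpDist_le n
      _ = 4 ^ n / n.factorial * (2 * Real.log 4) := by ring

lemma tsum_one_div_factorial_add_le_log_bumpDist (n : ℕ) :
    ∑' k : ℕ, 1 / ((k + n).factorial : ℝ) ≤ Real.exp 1 / (2 * Real.log 4) *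
      (1 / (n + 1).factorial * Real.log (bumpDist n / (4 * bumpDist (n + 1)))) := by
  refine (tsum_one_div_factorial_add_le n).trans_eq ?_
  rw [bumpDist_div, Real.log_pow, Nat.factorial_succ]
  push_cast
  field_simp

end Example

/-- There exists a radial weight `ω ∉ D̂` whose associated function `ω̃` is a
weight and belongs to `D̂`. -/
theorem statement3 :
    ∃ ω : ℝ → ℝ, RadialWeight ω ∧ ¬ Dhat ω ∧
      MeasureTheory.IntegrableOn (assocW ω) (Set.Ico 0 1) ∧ Dhat (assocW ω) := by
  have hm : ∀ n : ℕ, 0 < 1 / (n.factorial : ℝ) := fun n => by positivity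
  have hm' := fun n => (hm n).le
  have hω := radialWeight_bumpWeight hm bumpDist_pos summable_one_div_factorial tendsto_bumpDist
  have hint := hω.integrableOn_assocW (integrableOn_bumpWeight_mul_log hm' bumpDist_pos
    bumpDist_le_one summable_one_div_factorial_mul_log_bumpDist)
  refine ⟨bumpWeight (fun n => 1 / (n.factorial : ℝ)) bumpDist, hω, ?_, hint, ?_⟩
  · exact not_dhat_bumpWeight hm' bumpDist_pos summable_one_div_factorial bumpDist_le_one
      antitone_bumpDist exists_mul_tsum_one_div_factorial_lt
  · exact dhat_assocW_bumpWeight hm bumpDist_pos summable_one_div_factorial tendsto_bumpDist hint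
      four_mul_bumpDist_succ_le (by positivity) tsum_one_div_factorial_add_le_log_bumpDist
end
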